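/- arXiv:1812.06911 — 2 statements merged into one kernel-verified Lean document; each statement's English description precedes it below -/
import Mathlib

section
/- For every u₀ ∈ L¹(Ω) there exists a unique solution u of the nonlocal Dirichlet problem with data (u₀, g) on [0,T] for every T > 0; that is, there is a unique measurable u : G × [0,∞) → ℝ with u(x,t) = g(x,t) for x ∉ Ω and all t ≥ 0, t ↦ u(·,t)|_Ω continuous from [0,∞) into L¹(Ω), and u(x,t) = u₀(x) + ∫₀ᵗ ∫_G K(x,y)(u(y,s) − u(x,s)) dμ(y) ds for almost every x ∈ Ω and every t ≥ 0. -/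
open MeasureTheory Set

/-- `u` is a solution of the nonlocal Dirichlet problem with data `(u₀, g)` on `[0,∞)`:
measurable, equal to `g` off `Ω`, `t ↦ u(·,t)|_Ω` continuous from `[0,∞)` into `L¹(Ω)`,
and satisfying the integral equation for a.e. `x ∈ Ω` and every `t ≥ 0`. -/
def IsNonlocalSolution {G : Type*} [MeasurableSpace G] (μ : Measure G) (Ω : Set G)
    (K : G → G → ℝ) (g : G → ℝ → ℝ) (u₀ : G → ℝ) (u : G → ℝ → ℝ) : Prop :=
  Measurable (fun p : G × ℝ => u p.1 p.2) ∧
  (∀ x ∉ Ω, ∀ t, 0 ≤ t → u x t = g x t) ∧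
  (∀ t, 0 ≤ t → IntegrableOn (fun x => u x t) Ω μ) ∧
  (∀ s, 0 ≤ s →
    Filter.Tendsto (fun t => ∫ x in Ω, |u x t - u x s| ∂μ)
      (nhdsWithin s (Ici (0:ℝ))) (nhds 0)) ∧
  (∀ t, 0 ≤ t →
    ∀ᵐ x ∂μ.restrict Ω,
      u x t = u₀ x + ∫ s in (0:ℝ)..t, ∫ y, K x y * (u y s - u x s) ∂μ)

/-! For `x ∈ Ω` the inner integral only sees `Ω ∪ F'`, so `μ` may be replaced by its restriction to
this set and assumed finite. The operator `L f (x) = ∫ K(x, y) (f(y) - f(x)) dμ(y)` then satisfies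
two bounds. For every integrable weight `h ≥ 1`, it maps functions dominated by `a h` to functions
dominated by `C a h`; with `h = 1 + c + |1_Ω u₀|`, where `|g| ≤ c`, the Dyson series of the
equation is dominated by the exponential series, so it solves the problem on the whole time axis
at once. It is also bounded on `L¹(μ)`; the difference of two solutions vanishes off `Ω`, so its
`L¹`-norm is at most a constant times the time integral of this norm, and Grönwall's inequality
gives uniqueness. -/

open Filter Function Topology
open scoped Interval

section NonlocalOp

variable {G : Type*} [MeasurableSpace G] {μ : Measure G} {K : G → G → ℝ} {M : ℝ}

/-- The nonlocal diffusion operator `f ↦ ∫ K(·, y) (f(y) - f(·)) dμ(y)` with kernel `K`. -/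
noncomputable def nonlocalOp (μ : Measure G) (K : G → G → ℝ) (f : G → ℝ) (x : G) : ℝ :=
  ∫ y, K x y * (f y - f x) ∂μ

theorem nonlocalOp_restrict {S : Set G} {x : G} (hKS : support (K x) ⊆ S) (f : G → ℝ) :
    nonlocalOp (μ.restrict S) K f x = nonlocalOp μ K f x :=
  setIntegral_eq_integral_of_forall_compl_eq_zero fun y hy => by
    rw [notMem_support.mp fun h => hy (hKS h), zero_mul]

theorem measurable_nonlocalOp [SFinite μ] {S : Type*} [MeasurableSpace S]
    (hK : Measurable fun p : G × G => K p.1 p.2) {w : G → S → ℝ}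
    (hw : Measurable fun p : G × S => w p.1 p.2) :
    Measurable fun p : G × S => nonlocalOp μ K (fun y => w y p.2) p.1 := by
  have hintegrand : Measurable fun q : (G × S) × G =>
      K q.1.1 q.2 * (w q.2 q.1.2 - w q.1.1 q.1.2) :=
    (hK.comp (f := fun q : (G × S) × G => (q.1.1, q.2)) (by fun_prop)).mul
      ((hw.comp (f := fun q : (G × S) × G => (q.2, q.1.2)) (by fun_prop)).sub
        (hw.comp (f := fun q : (G × S) × G => q.1) (by fun_prop)))
  exact hintegrand.stronglyMeasurable.integral_prod_right.measurable

variable [IsFiniteMeasure μ] {f f' : G → ℝ} {x : G}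

theorem integrable_kernel_mul_sub (hK : Measurable (K x)) (hKM : ∀ y, |K x y| ≤ M)
    (hf : Integrable f μ) : Integrable (fun y => K x y * (f y - f x)) μ :=
  (hf.sub (integrable_const (f x))).bdd_mul (f := K x) hK.aestronglyMeasurable (ae_of_all _ hKM)

theorem nonlocalOp_sub (hK : Measurable (K x)) (hKM : ∀ y, |K x y| ≤ M)
    (hf : Integrable f μ) (hf' : Integrable f' μ) :
    nonlocalOp μ K (fun y => f y - f' y) x = nonlocalOp μ K f x - nonlocalOp μ K f' x := by
  simp only [nonlocalOp]
  rw [← integral_sub (integrable_kernel_mul_sub hK hKM hf)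
    (integrable_kernel_mul_sub hK hKM hf')]
  congr 1 with y
  ring

theorem abs_nonlocalOp_le (hKM : ∀ y, |K x y| ≤ M) (hf : Integrable f μ) :
    |nonlocalOp μ K f x| ≤ M * (∫ y, |f y| ∂μ + μ.real univ * |f x|) := by
  have hbound : |nonlocalOp μ K f x| ≤ ∫ y, M * (|f y| + |f x|) ∂μ := by
    rw [nonlocalOp, ← Real.norm_eq_abs]
    refine norm_integral_le_of_norm_le ((hf.abs.add (integrable_const _)).const_mul M)
      (ae_of_all _ fun y => ?_)
    rw [norm_mul, Real.norm_eq_abs, Real.norm_eq_abs]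
    exact mul_le_mul (hKM y) (abs_sub _ _) (abs_nonneg _) ((abs_nonneg _).trans (hKM y))
  rwa [integral_const_mul, integral_add hf.abs (integrable_const _), integral_const,
    smul_eq_mul] at hbound

theorem integrable_nonlocalOp (hK : Measurable fun p : G × G => K p.1 p.2)
    (hKM : ∀ x y, |K x y| ≤ M) {τ : Measure ℝ} [SFinite τ] {w : G → ℝ → ℝ}
    (hw : Measurable fun p : G × ℝ => w p.1 p.2)
    (hwi : Integrable (fun p : G × ℝ => w p.1 p.2) (μ.prod τ)) :
    Integrable (fun p : G × ℝ => nonlocalOp μ K (fun y => w y p.2) p.1) (μ.prod τ) := by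
  have hdom : Integrable (fun p : G × ℝ =>
      M * (∫ y, |w y p.2| ∂μ + μ.real univ * |w p.1 p.2|)) (μ.prod τ) := by
    have hslice : Integrable (fun s => ∫ y, |w y s| ∂μ) τ := hwi.abs.integral_prod_right
    exact ((hslice.comp_snd μ).add (hwi.abs.const_mul _)).const_mul M
  refine hdom.mono' (measurable_nonlocalOp hK hw).aestronglyMeasurable ?_
  filter_upwards [Measure.quasiMeasurePreserving_snd.ae hwi.prod_left_ae] with p hp
  exact abs_nonlocalOp_le (hKM p.1) hp

theorem integral_abs_nonlocalOp_le (hKM : ∀ x y, |K x y| ≤ M) (hf : Integrable f μ) :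
    ∫ x, |nonlocalOp μ K f x| ∂μ ≤ 2 * M * μ.real univ * ∫ x, |f x| ∂μ := by
  have hdom : Integrable (fun x => M * (∫ y, |f y| ∂μ + μ.real univ * |f x|)) μ :=
    ((integrable_const _).add (hf.abs.const_mul _)).const_mul M
  calc ∫ x, |nonlocalOp μ K f x| ∂μ
      ≤ ∫ x, M * (∫ y, |f y| ∂μ + μ.real univ * |f x|) ∂μ :=
        integral_mono_of_nonneg (ae_of_all _ fun _ => abs_nonneg _) hdom
          (ae_of_all _ fun x => abs_nonlocalOp_le (hKM x) hf)
    _ = 2 * M * μ.real univ * ∫ x, |f x| ∂μ := by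
        rw [integral_const_mul, integral_add (integrable_const _) (hf.abs.const_mul _),
          integral_const, integral_const_mul, smul_eq_mul]
        ring

/-- A bound for the nonlocal operator with kernel bounded by `M` on the space of functions
dominated by a multiple of the weight `h`, valid when `1 ≤ h`. -/
noncomputable def weightedOpBound (μ : Measure G) (M : ℝ) (h : G → ℝ) : ℝ :=
  M * (∫ y, h y ∂μ + μ.real univ)

variable {h : G → ℝ}

theorem abs_nonlocalOp_le_of_abs_le (hKM : ∀ y, |K x y| ≤ M) (hh : Integrable h μ)
    (h1 : ∀ y, 1 ≤ h y) (hf : Measurable f) {a : ℝ} (hfa : ∀ y, |f y| ≤ a * h y) :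
    |nonlocalOp μ K f x| ≤ weightedOpBound μ M h * (a * h x) := by
  have hM : 0 ≤ M := (abs_nonneg _).trans (hKM x)
  have ha : 0 ≤ a :=
    nonneg_of_mul_nonneg_left ((abs_nonneg _).trans (hfa x)) (one_pos.trans_le (h1 x))
  have hfi : Integrable f μ := (hh.const_mul a).mono' hf.aestronglyMeasurable (ae_of_all _ hfa)
  have hint : ∫ y, |f y| ∂μ ≤ (∫ y, h y ∂μ) * (a * h x) :=
    calc ∫ y, |f y| ∂μ ≤ ∫ y, a * h y ∂μ := integral_mono hfi.abs (hh.const_mul a) hfa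
      _ = (∫ y, h y ∂μ) * (a * 1) := by rw [integral_const_mul]; ring
      _ ≤ (∫ y, h y ∂μ) * (a * h x) := by
          have : 0 ≤ ∫ y, h y ∂μ := integral_nonneg fun y => zero_le_one.trans (h1 y)
          gcongr
          exact h1 x
  calc |nonlocalOp μ K f x| ≤ M * (∫ y, |f y| ∂μ + μ.real univ * |f x|) :=
        abs_nonlocalOp_le hKM hfi
    _ ≤ M * ((∫ y, h y ∂μ) * (a * h x) + μ.real univ * (a * h x)) := by
        gcongr
        exact hfa x
    _ = weightedOpBound μ M h * (a * h x) := by rw [weightedOpBound]; ring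

theorem hasSum_nonlocalOp (hK : Measurable (K x)) (hKM : ∀ y, |K x y| ≤ M)
    (hh : Integrable h μ) {F : ℕ → G → ℝ} {a : ℕ → ℝ} (ha : Summable a)
    (hFm : ∀ n, Measurable (F n)) (hFa : ∀ n y, |F n y| ≤ a n * h y)
    (hf : ∀ y, HasSum (fun n => F n y) (f y)) :
    HasSum (fun n => nonlocalOp μ K (F n) x) (nonlocalOp μ K f x) := by
  have hsum (y : G) : HasSum (fun n => M * (a n * h y + a n * h x))
      (M * ((∑' n, a n) * h y + (∑' n, a n) * h x)) :=
    ((ha.hasSum.mul_right _).add (ha.hasSum.mul_right _)).mul_left M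
  refine hasSum_integral_of_dominated_convergence (fun n y => M * (a n * h y + a n * h x))
    (fun n => by fun_prop) (fun n => ae_of_all _ fun y => ?_)
    (ae_of_all _ fun y => (hsum y).summable) ?_
    (ae_of_all _ fun y => ((hf y).sub (hf x)).mul_left (K x y))
  · rw [norm_mul, Real.norm_eq_abs, Real.norm_eq_abs]
    exact mul_le_mul (hKM y) ((abs_sub _ _).trans (add_le_add (hFa n y) (hFa n x)))
      (abs_nonneg _) ((abs_nonneg _).trans (hKM y))
  · simp only [(hsum _).tsum_eq]
    exact ((hh.const_mul _).add (integrable_const _)).const_mul M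

end NonlocalOp

section Dyson

open scoped Nat

variable {G : Type*} [MeasurableSpace G] {μ : Measure G} {Ω : Set G} {K : G → G → ℝ} {M : ℝ}
  {w₀ : G → ℝ → ℝ}

theorem measurable_intervalIntegral_zero_left {b : G → ℝ → ℝ}
    (hb : Measurable fun p : G × ℝ => b p.1 p.2) :
    Measurable fun p : G × ℝ => ∫ s in (0 : ℝ)..p.2, b p.1 s := by
  have hscale (p : G × ℝ) :
      ∫ s in (0 : ℝ)..p.2, b p.1 s = p.2 * ∫ r in Ioc (0 : ℝ) 1, b p.1 (p.2 * r) := by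
    rw [← intervalIntegral.integral_of_le zero_le_one,
      intervalIntegral.mul_integral_comp_mul_left, mul_zero, mul_one]
  have hbs : Measurable fun q : (G × ℝ) × ℝ => b q.1.1 (q.1.2 * q.2) :=
    hb.comp (f := fun q : (G × ℝ) × ℝ => (q.1.1, q.1.2 * q.2)) (by fun_prop)
  simp only [hscale]
  exact measurable_snd.mul hbs.stronglyMeasurable.integral_prod_right.measurable

/-- The `n`-th term of the Dyson series of the Volterra equation
`u(·, t) = w₀(·, t) + 1_Ω ∫₀ᵗ L u(·, s) ds`, where `L = nonlocalOp μ K`. -/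
noncomputable def dysonTerm (μ : Measure G) (Ω : Set G) (K : G → G → ℝ) (w₀ : G → ℝ → ℝ) :
    ℕ → G → ℝ → ℝ
  | 0 => w₀
  | n + 1 => fun x t => Ω.indicator
      (fun x => ∫ s in (0 : ℝ)..t, nonlocalOp μ K (fun y => dysonTerm μ Ω K w₀ n y s) x) x

/-- The Dyson series solving `u(·, t) = w₀(·, t) + 1_Ω ∫₀ᵗ L u(·, s) ds` for
`L = nonlocalOp μ K`. It is considered for all real `t`, with oriented time integrals. -/
noncomputable def dysonSeries (μ : Measure G) (Ω : Set G) (K : G → G → ℝ) (w₀ : G → ℝ → ℝ)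
    (x : G) (t : ℝ) : ℝ :=
  ∑' n, dysonTerm μ Ω K w₀ n x t

theorem measurable_dysonTerm [SFinite μ] (hΩ : MeasurableSet Ω)
    (hK : Measurable fun p : G × G => K p.1 p.2) (hw₀ : Measurable fun p : G × ℝ => w₀ p.1 p.2)
    (n : ℕ) : Measurable fun p : G × ℝ => dysonTerm μ Ω K w₀ n p.1 p.2 := by
  induction n with
  | zero => exact hw₀
  | succ n ih =>
    exact (measurable_intervalIntegral_zero_left
      (b := fun x s => nonlocalOp μ K (fun y => dysonTerm μ Ω K w₀ n y s) x)
      (measurable_nonlocalOp hK ih)).indicator (measurable_fst hΩ)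

theorem hasSum_pow_div_factorial_mul (r c : ℝ) :
    HasSum (fun n : ℕ => r ^ n / n ! * c) (Real.exp r * c) := by
  rw [Real.exp_eq_exp_ℝ]
  exact (NormedSpace.expSeries_div_hasSum_exp r).mul_right c

variable [IsFiniteMeasure μ] {h : G → ℝ} (hΩ : MeasurableSet Ω)
  (hK : Measurable fun p : G × G => K p.1 p.2) (hKM : ∀ x y, |K x y| ≤ M)
  (hh : Integrable h μ) (h1 : ∀ x, 1 ≤ h x)
  (hw₀ : Measurable fun p : G × ℝ => w₀ p.1 p.2) (hw₀h : ∀ x t, |w₀ x t| ≤ h x)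

include hΩ hK hKM hh h1 hw₀ hw₀h

theorem abs_dysonTerm_le (n : ℕ) (x : G) (t : ℝ) :
    |dysonTerm μ Ω K w₀ n x t| ≤ (weightedOpBound μ M h * |t|) ^ n / n ! * h x := by
  set C := weightedOpBound μ M h
  induction n generalizing x t with
  | zero => simpa [dysonTerm] using hw₀h x t
  | succ n ih =>
    have hop (s : ℝ) : |nonlocalOp μ K (fun y => dysonTerm μ Ω K w₀ n y s) x| ≤
        C ^ (n + 1) / n ! * h x * |s| ^ n :=
      (abs_nonlocalOp_le_of_abs_le (hKM x) hh h1
        ((measurable_dysonTerm hΩ hK hw₀ n).comp measurable_prodMk_right)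
        fun y => ih y s).trans_eq (by ring)
    have hdom : IntegrableOn (fun s => C ^ (n + 1) / n ! * h x * |s| ^ n) (Ι 0 t) :=
      (Continuous.integrableOn_uIcc (by fun_prop)).mono_set uIoc_subset_uIcc
    have hpow : ∫ s in Ι 0 t, |s| ^ n = |t| ^ (n + 1) / (n + 1) := by
      simpa using integral_pow_abs_sub_uIoc (a := 0) (b := t) n
    calc |dysonTerm μ Ω K w₀ (n + 1) x t|
        ≤ |∫ s in (0 : ℝ)..t, nonlocalOp μ K (fun y => dysonTerm μ Ω K w₀ n y s) x| := by
          simpa only [dysonTerm, Real.norm_eq_abs] using norm_indicator_le_norm_self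
            (fun x => ∫ s in (0 : ℝ)..t, nonlocalOp μ K (fun y => dysonTerm μ Ω K w₀ n y s) x) x
      _ ≤ ∫ s in Ι 0 t, C ^ (n + 1) / n ! * h x * |s| ^ n := by
          rw [intervalIntegral.abs_intervalIntegral_eq, ← Real.norm_eq_abs]
          exact norm_integral_le_of_norm_le hdom (ae_of_all _ hop)
      _ = (C * |t|) ^ (n + 1) / (n + 1)! * h x := by
          rw [integral_const_mul, hpow, Nat.factorial_succ, mul_pow]
          push_cast
          field_simp

theorem abs_nonlocalOp_dysonTerm_le (n : ℕ) (x : G) (t : ℝ) :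
    |nonlocalOp μ K (fun y => dysonTerm μ Ω K w₀ n y t) x| ≤
      weightedOpBound μ M h * ((weightedOpBound μ M h * |t|) ^ n / n ! * h x) :=
  abs_nonlocalOp_le_of_abs_le (hKM x) hh h1
    ((measurable_dysonTerm hΩ hK hw₀ n).comp measurable_prodMk_right)
    fun y => abs_dysonTerm_le hΩ hK hKM hh h1 hw₀ hw₀h n y t

theorem hasSum_dysonSeries (x : G) (t : ℝ) :
    HasSum (fun n => dysonTerm μ Ω K w₀ n x t) (dysonSeries μ Ω K w₀ x t) :=
  (Summable.of_norm_bounded (hasSum_pow_div_factorial_mul _ _).summable fun n =>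
    abs_dysonTerm_le hΩ hK hKM hh h1 hw₀ hw₀h n x t).hasSum

theorem measurable_dysonSeries : Measurable fun p : G × ℝ => dysonSeries μ Ω K w₀ p.1 p.2 :=
  measurable_of_tendsto_metrizable
    (fun N => Finset.measurable_sum (Finset.range N) fun n _ => measurable_dysonTerm hΩ hK hw₀ n)
    (tendsto_pi_nhds.mpr fun p => by
      simpa using (hasSum_dysonSeries hΩ hK hKM hh h1 hw₀ hw₀h p.1 p.2).tendsto_sum_nat)

theorem abs_dysonSeries_le (x : G) (t : ℝ) :
    |dysonSeries μ Ω K w₀ x t| ≤ Real.exp (weightedOpBound μ M h * |t|) * h x := by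
  rw [dysonSeries, ← Real.norm_eq_abs]
  exact tsum_of_norm_bounded (hasSum_pow_div_factorial_mul _ _) fun n =>
    abs_dysonTerm_le hΩ hK hKM hh h1 hw₀ hw₀h n x t

theorem hasSum_nonlocalOp_dysonTerm (x : G) (t : ℝ) :
    HasSum (fun n => nonlocalOp μ K (fun y => dysonTerm μ Ω K w₀ n y t) x)
      (nonlocalOp μ K (fun y => dysonSeries μ Ω K w₀ y t) x) :=
  hasSum_nonlocalOp (by fun_prop) (hKM x) hh
    (a := fun n => (weightedOpBound μ M h * |t|) ^ n / n !)
    (Real.summable_pow_div_factorial _)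
    (fun n => (measurable_dysonTerm hΩ hK hw₀ n).comp measurable_prodMk_right)
    (fun n y => abs_dysonTerm_le hΩ hK hKM hh h1 hw₀ hw₀h n y t)
    (fun y => hasSum_dysonSeries hΩ hK hKM hh h1 hw₀ hw₀h y t)

theorem hasSum_integral_nonlocalOp_dysonTerm (x : G) (t : ℝ) :
    HasSum (fun n => ∫ s in (0 : ℝ)..t, nonlocalOp μ K (fun y => dysonTerm μ Ω K w₀ n y s) x)
      (∫ s in (0 : ℝ)..t, nonlocalOp μ K (fun y => dysonSeries μ Ω K w₀ y s) x) := by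
  set C := weightedOpBound μ M h
  have hsum (s : ℝ) := (hasSum_pow_div_factorial_mul (C * |s|) (h x)).mul_left C
  refine intervalIntegral.hasSum_integral_of_dominated_convergence
    (fun n s => C * ((C * |s|) ^ n / n ! * h x)) (fun n => ?_)
    (fun n => ae_of_all _ fun s _ =>
      abs_nonlocalOp_dysonTerm_le hΩ hK hKM hh h1 hw₀ hw₀h n x s)
    (ae_of_all _ fun s _ => (hsum s).summable) ?_
    (ae_of_all _ fun s _ => hasSum_nonlocalOp_dysonTerm hΩ hK hKM hh h1 hw₀ hw₀h x s)
  · exact ((measurable_nonlocalOp hK (measurable_dysonTerm hΩ hK hw₀ n)).comp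
      measurable_prodMk_left).aestronglyMeasurable
  · simp only [(hsum _).tsum_eq]
    exact Continuous.intervalIntegrable (by fun_prop) _ _

theorem dysonSeries_eq_add_integral (x : G) (t : ℝ) :
    dysonSeries μ Ω K w₀ x t = w₀ x t + Ω.indicator
      (fun x => ∫ s in (0 : ℝ)..t, nonlocalOp μ K (fun y => dysonSeries μ Ω K w₀ y s) x) x := by
  have hsum := hasSum_dysonSeries hΩ hK hKM hh h1 hw₀ hw₀h x t
  rw [← hsum.tsum_eq, hsum.summable.tsum_eq_zero_add]
  congr 1
  by_cases hx : x ∈ Ω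
  · simp only [dysonTerm, indicator_of_mem hx]
    exact (hasSum_integral_nonlocalOp_dysonTerm hΩ hK hKM hh h1 hw₀ hw₀h x t).tsum_eq
  · simp only [dysonTerm, indicator_of_notMem hx, tsum_zero]

theorem continuous_integral_nonlocalOp_dysonSeries (x : G) :
    Continuous fun t =>
      ∫ s in (0 : ℝ)..t, nonlocalOp μ K (fun y => dysonSeries μ Ω K w₀ y s) x := by
  set C := weightedOpBound μ M h
  have hum := measurable_dysonSeries hΩ hK hKM hh h1 hw₀ hw₀h
  refine intervalIntegral.continuous_primitive (fun a b => ?_) 0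
  have hdom : IntervalIntegrable (fun s => C * (Real.exp (C * |s|) * h x)) volume a b :=
    Continuous.intervalIntegrable (by fun_prop) _ _
  refine hdom.mono_fun' ((measurable_nonlocalOp hK hum).comp
    measurable_prodMk_left).aestronglyMeasurable (ae_of_all _ fun s => ?_)
  exact abs_nonlocalOp_le_of_abs_le (hKM x) hh h1 (hum.comp measurable_prodMk_right)
    fun y => abs_dysonSeries_le hΩ hK hKM hh h1 hw₀ hw₀h y s

end Dyson

section ContinuousOnL1

variable {G : Type*} [MeasurableSpace G] {ρ : Measure G} {w w' : G → ℝ → ℝ} {I : Set ℝ}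

/-- The curve `t ↦ w(·, t)` takes values in `L¹(ρ)` and is continuous in the `L¹`-norm for
times in `I`. Functions are not identified up to a.e. equality, since joint measurability of
representatives matters. -/
def ContinuousOnL1 (ρ : Measure G) (w : G → ℝ → ℝ) (I : Set ℝ) : Prop :=
  (∀ t ∈ I, Integrable (fun x => w x t) ρ) ∧
  ∀ s ∈ I, Tendsto (fun t => ∫ x, |w x t - w x s| ∂ρ) (𝓝[I] s) (𝓝 0)

namespace ContinuousOnL1

theorem sub (hw : ContinuousOnL1 ρ w I) (hw' : ContinuousOnL1 ρ w' I) :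
    ContinuousOnL1 ρ (fun x t => w x t - w' x t) I := by
  refine ⟨fun t ht => (hw.1 t ht).sub (hw'.1 t ht), fun s hs => ?_⟩
  have hsum := (hw.2 s hs).add (hw'.2 s hs)
  rw [add_zero] at hsum
  refine squeeze_zero' (Eventually.of_forall fun t => integral_nonneg fun x => abs_nonneg _) ?_ hsum
  filter_upwards [self_mem_nhdsWithin] with t ht
  have hi : Integrable (fun x => |w x t - w x s|) ρ := ((hw.1 t ht).sub (hw.1 s hs)).abs
  have hi' : Integrable (fun x => |w' x t - w' x s|) ρ := ((hw'.1 t ht).sub (hw'.1 s hs)).abs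
  rw [← integral_add hi hi']
  refine integral_mono_of_nonneg (ae_of_all _ fun x => abs_nonneg _) (hi.add hi')
    (ae_of_all _ fun x => ?_)
  simpa only [sub_sub_sub_comm] using abs_sub (w x t - w x s) (w' x t - w' x s)

theorem continuousOn_integral_abs (hw : ContinuousOnL1 ρ w I) :
    ContinuousOn (fun t => ∫ x, |w x t| ∂ρ) I := by
  intro s hs
  refine tendsto_iff_dist_tendsto_zero.mpr
    (squeeze_zero' (Eventually.of_forall fun t => dist_nonneg) ?_ (hw.2 s hs))
  filter_upwards [self_mem_nhdsWithin] with t ht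
  rw [Real.dist_eq, ← integral_sub (hw.1 t ht).abs (hw.1 s hs).abs]
  exact abs_integral_le_integral_abs.trans
    (integral_mono_of_nonneg (ae_of_all _ fun x => abs_nonneg _)
      ((hw.1 t ht).sub (hw.1 s hs)).abs (ae_of_all _ fun x => abs_abs_sub_abs_le _ _))

theorem integrable_prod [SFinite ρ] (hw : ContinuousOnL1 ρ w I)
    (hwm : Measurable fun p : G × ℝ => w p.1 p.2) {a b : ℝ} (hab : Icc a b ⊆ I) :
    Integrable (fun p : G × ℝ => w p.1 p.2) (ρ.prod (volume.restrict (Ioc a b))) := by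
  rw [integrable_prod_iff' hwm.aestronglyMeasurable]
  refine ⟨?_, ((hw.continuousOn_integral_abs.mono hab).integrableOn_Icc).mono_set
    Ioc_subset_Icc_self⟩
  filter_upwards [ae_restrict_mem measurableSet_Ioc] with s hs
  exact hw.1 s (hab (Ioc_subset_Icc_self hs))

end ContinuousOnL1

theorem continuousOnL1_of_dominated (hwm : ∀ t, AEStronglyMeasurable (fun x => w x t) ρ)
    {E : ℝ → ℝ} (hE : Continuous E) {h : G → ℝ} (hh : Integrable h ρ)
    (hwh : ∀ t, ∀ᵐ x ∂ρ, |w x t| ≤ E t * h x) (hwc : ∀ᵐ x ∂ρ, Continuous (w x)) :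
    ContinuousOnL1 ρ w I := by
  refine ⟨fun t _ => (hh.const_mul (E t)).mono' (hwm t) (hwh t), fun s _ => ?_⟩
  have hbound : ∀ᶠ t in 𝓝[I] s, ∀ᵐ x ∂ρ,
      ‖|w x t - w x s|‖ ≤ (|E s| + 1) * |h x| + |E s| * |h x| := by
    filter_upwards [nhdsWithin_le_nhds (hE.abs.continuousAt.eventually
      (gt_mem_nhds (lt_add_one |E s|)))] with t ht
    filter_upwards [hwh t, hwh s] with x hxt hxs
    have hEh (r : ℝ) : E r * h x ≤ |E r| * |h x| := (le_abs_self _).trans_eq (abs_mul _ _)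
    rw [Real.norm_eq_abs, abs_abs]
    calc |w x t - w x s| ≤ |w x t| + |w x s| := abs_sub _ _
      _ ≤ |E t| * |h x| + |E s| * |h x| :=
          add_le_add (hxt.trans (hEh t)) (hxs.trans (hEh s))
      _ ≤ (|E s| + 1) * |h x| + |E s| * |h x| := by gcongr
  have hlim : ∀ᵐ x ∂ρ, Tendsto (fun t => |w x t - w x s|) (𝓝[I] s) (𝓝 0) := by
    filter_upwards [hwc] with x hx
    have hcont : Continuous fun t => |w x t - w x s| := by fun_prop
    simpa using (hcont.tendsto s).mono_left nhdsWithin_le_nhds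
  simpa using tendsto_integral_filter_of_dominated_convergence
    (fun x => (|E s| + 1) * |h x| + |E s| * |h x|)
    (Eventually.of_forall fun t => ((hwm t).sub (hwm s)).norm) hbound
    ((hh.abs.const_mul _).add (hh.abs.const_mul _)) hlim

end ContinuousOnL1

theorem eqOn_zero_of_le_mul_integral {φ : ℝ → ℝ} {C a b : ℝ} (hφ : ContinuousOn φ (Icc a b))
    (hφ0 : ∀ t ∈ Icc a b, 0 ≤ φ t) (hle : ∀ t ∈ Icc a b, φ t ≤ C * ∫ s in a..t, φ s) :
    EqOn φ 0 (Icc a b) := by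
  intro t ht
  have hab : a ≤ b := ht.1.trans ht.2
  have hprim : ContinuousOn (fun r => ∫ s in a..r, φ s) (Icc a b) := by
    rw [← uIcc_of_le hab] at hφ ⊢
    exact intervalIntegral.continuousOn_primitive_interval (hφ.integrableOn_compact isCompact_uIcc)
  have hderiv : ∀ r ∈ Ico a b, HasDerivWithinAt (fun r => ∫ s in a..r, φ s) (φ r) (Ici r) r := by
    intro r hr
    have hmem : Icc a b ∈ 𝓝[>] r := Icc_mem_nhdsGT_of_mem hr
    have hr' : r ∈ Icc a b := Ico_subset_Icc_self hr
    exact intervalIntegral.integral_hasDerivWithinAt_right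
      ((hφ.mono (Icc_subset_Icc_right hr'.2)).intervalIntegrable_of_Icc hr.1)
      ((hφ.stronglyMeasurableAtFilter_nhdsWithin measurableSet_Icc r).filter_mono
        (nhdsWithin_le_of_mem hmem))
      ((hφ r hr').mono_of_mem_nhdsWithin hmem)
  have hbound : ∀ r ∈ Ico a b, ‖φ r‖ ≤ C * ‖∫ s in a..r, φ s‖ := by
    intro r hr
    have hr' : r ∈ Icc a b := Ico_subset_Icc_self hr
    have hint : 0 ≤ ∫ s in a..r, φ s := intervalIntegral.integral_nonneg hr.1 fun s hs =>
      hφ0 s ⟨hs.1, hs.2.trans hr'.2⟩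
    rw [Real.norm_of_nonneg (hφ0 r hr'), Real.norm_of_nonneg hint]
    exact hle r hr'
  have hzero : ∫ s in a..t, φ s = 0 := eq_zero_of_abs_deriv_le_mul_abs_self_of_eq_zero_right
    hprim hderiv intervalIntegral.integral_same hbound t ht
  refine le_antisymm ?_ (hφ0 t ht)
  simpa [hzero] using hle t ht

namespace IsNonlocalSolution

variable {G : Type*} [MeasurableSpace G] {μ : Measure G} {Ω : Set G} {K : G → G → ℝ} {M c : ℝ}
  {g : G → ℝ → ℝ} {u₀ : G → ℝ} {u u' : G → ℝ → ℝ}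

theorem continuousOnL1 (hu : IsNonlocalSolution μ Ω K g u₀ u) :
    ContinuousOnL1 (μ.restrict Ω) u (Ici 0) :=
  ⟨hu.2.2.1, hu.2.2.2.1⟩

theorem ae_eq_add_integral (hu : IsNonlocalSolution μ Ω K g u₀ u) {t : ℝ} (ht : 0 ≤ t) :
    ∀ᵐ x ∂μ.restrict Ω, u x t = u₀ x + ∫ s in (0 : ℝ)..t, nonlocalOp μ K (fun y => u y s) x :=
  hu.2.2.2.2 t ht

theorem sub_eq_zero_of_notMem (hu : IsNonlocalSolution μ Ω K g u₀ u)
    (hu' : IsNonlocalSolution μ Ω K g u₀ u') {x : G} (hx : x ∉ Ω) {t : ℝ} (ht : 0 ≤ t) :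
    u' x t - u x t = 0 := by
  rw [hu.2.1 x hx t ht, hu'.2.1 x hx t ht, sub_self]

theorem setIntegral_abs_sub (hu : IsNonlocalSolution μ Ω K g u₀ u)
    (hu' : IsNonlocalSolution μ Ω K g u₀ u') {t : ℝ} (ht : 0 ≤ t) :
    ∫ x in Ω, |u' x t - u x t| ∂μ = ∫ x, |u' x t - u x t| ∂μ :=
  setIntegral_eq_integral_of_forall_compl_eq_zero fun x hx => by
    rw [hu.sub_eq_zero_of_notMem hu' hx ht, abs_zero]

variable [IsFiniteMeasure μ]

theorem integrable_prod (hu : IsNonlocalSolution μ Ω K g u₀ u) (hΩ : MeasurableSet Ω)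
    (hgc : ∀ x t, |g x t| ≤ c) (t : ℝ) :
    Integrable (fun p : G × ℝ => u p.1 p.2) (μ.prod (volume.restrict (Ioc 0 t))) := by
  have hin : IntegrableOn (fun p : G × ℝ => u p.1 p.2) (Ω ×ˢ univ)
      (μ.prod (volume.restrict (Ioc 0 t))) := by
    rw [IntegrableOn, ← Measure.prod_restrict, Measure.restrict_univ]
    exact hu.continuousOnL1.integrable_prod hu.1 Icc_subset_Ici_self
  have hout : IntegrableOn (fun p : G × ℝ => u p.1 p.2) (Ωᶜ ×ˢ univ)
      (μ.prod (volume.restrict (Ioc 0 t))) := by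
    rw [IntegrableOn, ← Measure.prod_restrict, Measure.restrict_univ]
    refine Integrable.of_bound hu.1.aestronglyMeasurable c ?_
    rw [Measure.prod_restrict]
    filter_upwards [ae_restrict_mem (hΩ.compl.prod measurableSet_Ioc)] with p hp
    rw [hu.2.1 p.1 hp.1 p.2 hp.2.1.le]
    exact hgc p.1 p.2
  simpa only [← union_prod, union_compl_self, univ_prod_univ, integrableOn_univ]
    using hin.union hout

theorem ae_sub_eq_integral (hu : IsNonlocalSolution μ Ω K g u₀ u)
    (hu' : IsNonlocalSolution μ Ω K g u₀ u') (hΩ : MeasurableSet Ω)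
    (hK : Measurable fun p : G × G => K p.1 p.2) (hKM : ∀ x y, |K x y| ≤ M)
    (hgc : ∀ x t, |g x t| ≤ c) {t : ℝ} (ht : 0 ≤ t) :
    ∀ᵐ x ∂μ.restrict Ω, u' x t - u x t =
      ∫ s in (0 : ℝ)..t, nonlocalOp μ K (fun y => u' y s - u y s) x := by
  have hi := hu.integrable_prod hΩ hgc t
  have hi' := hu'.integrable_prod hΩ hgc t
  filter_upwards [hu.ae_eq_add_integral ht, hu'.ae_eq_add_integral ht,
    ae_restrict_of_ae (integrable_nonlocalOp hK hKM hu.1 hi).prod_right_ae,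
    ae_restrict_of_ae (integrable_nonlocalOp hK hKM hu'.1 hi').prod_right_ae]
    with x hx hx' hLx hLx'
  rw [hx, hx', add_sub_add_left_eq_sub]
  simp only [intervalIntegral.integral_of_le ht]
  rw [← integral_sub hLx' hLx]
  refine integral_congr_ae ?_
  filter_upwards [hi.prod_left_ae, hi'.prod_left_ae] with s hs hs'
  exact (nonlocalOp_sub (by fun_prop) (hKM x) hs' hs).symm

theorem setIntegral_abs_sub_le (hu : IsNonlocalSolution μ Ω K g u₀ u)
    (hu' : IsNonlocalSolution μ Ω K g u₀ u') (hΩ : MeasurableSet Ω)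
    (hK : Measurable fun p : G × G => K p.1 p.2) (hKM : ∀ x y, |K x y| ≤ M)
    (hgc : ∀ x t, |g x t| ≤ c) {t : ℝ} (ht : 0 ≤ t) :
    ∫ x in Ω, |u' x t - u x t| ∂μ ≤
      2 * M * μ.real univ * ∫ s in (0 : ℝ)..t, ∫ x in Ω, |u' x s - u x s| ∂μ := by
  have hi := (hu'.integrable_prod hΩ hgc t).sub (hu.integrable_prod hΩ hgc t)
  have hL : Integrable (fun p : G × ℝ => |nonlocalOp μ K (fun y => u' y p.2 - u y p.2) p.1|)
      (μ.prod (volume.restrict (Ioc 0 t))) :=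
    (integrable_nonlocalOp (w := fun x s => u' x s - u x s) hK hKM (hu'.1.sub hu.1) hi).abs
  have hLnonneg (x : G) : 0 ≤ ∫ s in Ioc 0 t, |nonlocalOp μ K (fun y => u' y s - u y s) x| :=
    integral_nonneg fun _ => abs_nonneg _
  have hle : ∀ᵐ x ∂μ.restrict Ω, |u' x t - u x t| ≤
      ∫ s in Ioc 0 t, |nonlocalOp μ K (fun y => u' y s - u y s) x| := by
    filter_upwards [hu.ae_sub_eq_integral hu' hΩ hK hKM hgc ht] with x hx
    rw [hx, intervalIntegral.integral_of_le ht]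
    exact abs_integral_le_integral_abs
  calc ∫ x in Ω, |u' x t - u x t| ∂μ
      ≤ ∫ x in Ω, (∫ s in Ioc 0 t, |nonlocalOp μ K (fun y => u' y s - u y s) x|) ∂μ :=
        integral_mono_of_nonneg (ae_of_all _ fun _ => abs_nonneg _)
          hL.integral_prod_left.integrableOn hle
    _ ≤ ∫ x, (∫ s in Ioc 0 t, |nonlocalOp μ K (fun y => u' y s - u y s) x|) ∂μ :=
        setIntegral_le_integral hL.integral_prod_left (ae_of_all _ hLnonneg)
    _ = ∫ s in Ioc 0 t, ∫ x, |nonlocalOp μ K (fun y => u' y s - u y s) x| ∂μ :=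
        integral_integral_swap hL
    _ ≤ ∫ s in Ioc 0 t, 2 * M * μ.real univ * ∫ x, |u' x s - u x s| ∂μ := by
        refine integral_mono_ae hL.integral_prod_right
          (hi.abs.integral_prod_right.const_mul _) ?_
        filter_upwards [hi.prod_left_ae] with s hs
        exact integral_abs_nonlocalOp_le hKM hs
    _ = 2 * M * μ.real univ * ∫ s in (0 : ℝ)..t, ∫ x in Ω, |u' x s - u x s| ∂μ := by
        rw [integral_const_mul, intervalIntegral.integral_of_le ht]
        congr 1
        exact setIntegral_congr_fun measurableSet_Ioc fun s hs =>
          (hu.setIntegral_abs_sub hu' hs.1.le).symm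

theorem ae_eq (hu : IsNonlocalSolution μ Ω K g u₀ u)
    (hu' : IsNonlocalSolution μ Ω K g u₀ u') (hΩ : MeasurableSet Ω)
    (hK : Measurable fun p : G × G => K p.1 p.2) (hKM : ∀ x y, |K x y| ≤ M)
    (hgc : ∀ x t, |g x t| ≤ c) {t : ℝ} (ht : 0 ≤ t) :
    (fun x => u' x t) =ᵐ[μ.restrict Ω] fun x => u x t := by
  have hsub := hu'.continuousOnL1.sub hu.continuousOnL1
  have hzero : ∫ x in Ω, |u' x t - u x t| ∂μ = 0 :=
    eqOn_zero_of_le_mul_integral (hsub.continuousOn_integral_abs.mono Icc_subset_Ici_self)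
      (fun _ _ => integral_nonneg fun _ => abs_nonneg _)
      (fun _ hs => hu.setIntegral_abs_sub_le hu' hΩ hK hKM hgc hs.1) (right_mem_Icc.mpr ht)
  rw [integral_eq_zero_iff_of_nonneg (fun _ => abs_nonneg _) (hsub.1 t ht).abs] at hzero
  filter_upwards [hzero] with x hx
  exact sub_eq_zero.mp (abs_eq_zero.mp hx)

end IsNonlocalSolution

section Existence

variable {G : Type*} {Ω : Set G} {g : G → ℝ → ℝ} {u₀ : G → ℝ} {c : ℝ}

open Classical in
/-- The datum equal to the initial datum `u₀` in `Ω` and to the boundary datum `g` off `Ω`, the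
inhomogeneous term of the Volterra equation equivalent to the Dirichlet problem. -/
noncomputable def dirichletDatum (Ω : Set G) (g : G → ℝ → ℝ) (u₀ : G → ℝ) (x : G) (t : ℝ) : ℝ :=
  if x ∈ Ω then u₀ x else g x t

theorem abs_dirichletDatum_le (hgc : ∀ x t, |g x t| ≤ c) (x : G) (t : ℝ) :
    |dirichletDatum Ω g u₀ x t| ≤ 1 + c + |Ω.indicator u₀ x| := by
  have hc : 0 ≤ c := (abs_nonneg _).trans (hgc x 0)
  by_cases hx : x ∈ Ω
  · simp only [dirichletDatum, if_pos hx, indicator_of_mem hx]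
    linarith
  · simp only [dirichletDatum, if_neg hx, indicator_of_notMem hx, abs_zero]
    linarith [hgc x t]

variable [MeasurableSpace G]

theorem measurable_dirichletDatum (hΩ : MeasurableSet Ω)
    (hg : Measurable fun p : G × ℝ => g p.1 p.2) (hu₀ : Measurable u₀) :
    Measurable fun p : G × ℝ => dirichletDatum Ω g u₀ p.1 p.2 :=
  Measurable.ite (measurable_fst hΩ) (hu₀.comp measurable_fst) hg

theorem isNonlocalSolution_dysonSeries {μ : Measure G} [IsFiniteMeasure μ] {K : G → G → ℝ}
    {M : ℝ} (hΩ : MeasurableSet Ω)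
    (hK : Measurable fun p : G × G => K p.1 p.2) (hKM : ∀ x y, |K x y| ≤ M)
    (hg : Measurable fun p : G × ℝ => g p.1 p.2) (hgc : ∀ x t, |g x t| ≤ c)
    (hu₀ : Measurable u₀) (hu₀i : IntegrableOn u₀ Ω μ) :
    IsNonlocalSolution μ Ω K g u₀ (dysonSeries μ Ω K (dirichletDatum Ω g u₀)) := by
  set u := dysonSeries μ Ω K (dirichletDatum Ω g u₀)
  have hh : Integrable (fun x => 1 + c + |Ω.indicator u₀ x|) μ :=
    (integrable_const _).add ((integrable_indicator_iff hΩ).mpr hu₀i).abs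
  have h1 (x : G) : 1 ≤ 1 + c + |Ω.indicator u₀ x| := by
    linarith [abs_nonneg (Ω.indicator u₀ x), (abs_nonneg _).trans (hgc x 0)]
  have hw₀ := measurable_dirichletDatum hΩ hg hu₀
  have hw₀h := abs_dirichletDatum_le (Ω := Ω) (u₀ := u₀) hgc
  have hu : Measurable fun p : G × ℝ => u p.1 p.2 :=
    measurable_dysonSeries hΩ hK hKM hh h1 hw₀ hw₀h
  have hu_mem {x : G} (hx : x ∈ Ω) (t : ℝ) :
      u x t = u₀ x + ∫ s in (0 : ℝ)..t, nonlocalOp μ K (fun y => u y s) x := by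
    simpa only [dirichletDatum, if_pos hx, indicator_of_mem hx] using
      dysonSeries_eq_add_integral hΩ hK hKM hh h1 hw₀ hw₀h x t
  have hu_notMem {x : G} (hx : x ∉ Ω) (t : ℝ) : u x t = g x t := by
    simpa only [dirichletDatum, if_neg hx, indicator_of_notMem hx, add_zero] using
      dysonSeries_eq_add_integral hΩ hK hKM hh h1 hw₀ hw₀h x t
  have hcont {x : G} (hx : x ∈ Ω) : Continuous (u x) := by
    rw [funext (hu_mem hx)]
    exact continuous_const.add
      (continuous_integral_nonlocalOp_dysonSeries hΩ hK hKM hh h1 hw₀ hw₀h x)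
  have hL1 : ContinuousOnL1 (μ.restrict Ω) u (Ici 0) :=
    continuousOnL1_of_dominated
      (fun t => (hu.comp measurable_prodMk_right).aestronglyMeasurable)
      (Real.continuous_exp.comp (continuous_const.mul continuous_abs)) hh.integrableOn
      (fun t => ae_of_all _ fun x => abs_dysonSeries_le hΩ hK hKM hh h1 hw₀ hw₀h x t)
      ((ae_restrict_mem hΩ).mono fun _ => hcont)
  exact ⟨hu, fun x hx t _ => hu_notMem hx t, hL1.1, hL1.2,
    fun t _ => (ae_restrict_mem hΩ).mono fun x hx => hu_mem hx t⟩

end Existence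

section Dirichlet

variable {G : Type*} [MeasurableSpace G] {μ : Measure G} {Ω S : Set G} {K : G → G → ℝ}
  {g : G → ℝ → ℝ} {u₀ v₀ : G → ℝ} {u : G → ℝ → ℝ}

theorem IsNonlocalSolution.congr_initial (hu : IsNonlocalSolution μ Ω K g v₀ u)
    (h : v₀ =ᵐ[μ.restrict Ω] u₀) : IsNonlocalSolution μ Ω K g u₀ u := by
  refine ⟨hu.1, hu.2.1, hu.2.2.1, hu.2.2.2.1, fun t ht => ?_⟩
  filter_upwards [hu.2.2.2.2 t ht, h] with x hx hv
  rwa [← hv]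

theorem isNonlocalSolution_restrict_iff (hΩ : MeasurableSet Ω) (hΩS : Ω ⊆ S)
    (hKS : ∀ x ∈ Ω, support (K x) ⊆ S) :
    IsNonlocalSolution (μ.restrict S) Ω K g u₀ u ↔ IsNonlocalSolution μ Ω K g u₀ u := by
  have hop {x : G} (hx : x ∈ Ω) (f : G → ℝ) :
      ∫ y in S, K x y * (f y - f x) ∂μ = ∫ y, K x y * (f y - f x) ∂μ :=
    nonlocalOp_restrict (hKS x hx) f
  simp only [IsNonlocalSolution, IntegrableOn, Measure.restrict_restrict_of_subset hΩS]
  refine and_congr_right' (and_congr_right' (and_congr_right' (and_congr_right' ?_)))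
  refine forall₂_congr fun t _ => eventually_congr ((ae_restrict_mem hΩ).mono fun x hx => ?_)
  simp only [hop hx fun y => u y _]

end Dirichlet

theorem stmt2_general {G : Type*} [MeasurableSpace G] (μ : Measure G) (Ω F' : Set G)
    (hΩm : MeasurableSet Ω) (hΩfin : μ Ω < ⊤) (hF'fin : μ F' < ⊤)
    (K : G → G → ℝ) (hKmeas : Measurable (fun p : G × G => K p.1 p.2))
    (hKsupp : ∀ x ∈ Ω, support (K x) ⊆ F') (M : ℝ) (hKM : ∀ x y, |K x y| ≤ M)
    (g : G → ℝ → ℝ) (hgmeas : Measurable (fun p : G × ℝ => g p.1 p.2))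
    (hgbdd : ∃ C, ∀ x t, |g x t| ≤ C)
    (u₀ : G → ℝ) (hu₀ : IntegrableOn u₀ Ω μ) :
    ∃ u, IsNonlocalSolution μ Ω K g u₀ u ∧
      ∀ u', IsNonlocalSolution μ Ω K g u₀ u' →
        ∀ t, 0 ≤ t → (fun x => u' x t) =ᵐ[μ.restrict Ω] fun x => u x t := by
  obtain ⟨c, hgc⟩ := hgbdd
  have : IsFiniteMeasure (μ.restrict (Ω ∪ F')) :=
    isFiniteMeasure_restrict.mpr (measure_union_lt_top hΩfin hF'fin).ne
  have hrestrict : (μ.restrict (Ω ∪ F')).restrict Ω = μ.restrict Ω :=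
    Measure.restrict_restrict_of_subset subset_union_left
  have hiff (u : G → ℝ → ℝ) := isNonlocalSolution_restrict_iff (μ := μ) (g := g) (u₀ := u₀)
    (u := u) hΩm subset_union_left fun x hx => (hKsupp x hx).trans subset_union_right
  simp only [← hiff, ← hrestrict, IntegrableOn] at hu₀ ⊢
  have hsol := (isNonlocalSolution_dysonSeries hΩm hKmeas hKM hgmeas hgc
    hu₀.1.measurable_mk (hu₀.congr hu₀.1.ae_eq_mk)).congr_initial hu₀.1.ae_eq_mk.symm
  exact ⟨_, hsol, fun u' hu' t ht => hsol.ae_eq hu' hΩm hKmeas hKM hgc ht⟩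

/-- For every `u₀ ∈ L¹(Ω)` there exists a unique solution of the nonlocal
Dirichlet problem with data `(u₀, g)` (uniqueness in the `L¹(Ω)` sense, for each time). -/
theorem stmt2 {G : Type*} [MeasurableSpace G] (μ : Measure G) (Ω F' : Set G)
    (hΩm : MeasurableSet Ω) (hF'm : MeasurableSet F')
    (hΩfin : μ Ω < ⊤) (hF'fin : μ F' < ⊤)
    (K : G → G → ℝ) (hKmeas : Measurable (fun p : G × G => K p.1 p.2))
    (hKnonneg : ∀ x y, 0 ≤ K x y)
    (hKsupp : ∀ x y, (x, y) ∉ Ω ×ˢ F' → K x y = 0)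
    (M : ℝ) (hM : 0 < M) (hKle : ∀ x y, K x y ≤ M)
    (g : G → ℝ → ℝ) (hgmeas : Measurable (fun p : G × ℝ => g p.1 p.2))
    (hgbdd : ∃ C, ∀ x t, |g x t| ≤ C)
    (u₀ : G → ℝ) (hu₀ : IntegrableOn u₀ Ω μ) :
    ∃ u, IsNonlocalSolution μ Ω K g u₀ u ∧
      ∀ u', IsNonlocalSolution μ Ω K g u₀ u' →
        ∀ t, 0 ≤ t → (fun x => u' x t) =ᵐ[μ.restrict Ω] fun x => u x t :=
  stmt2_general μ Ω F' hΩm hΩfin hF'fin K hKmeas (fun x _ => support_subset_iff'.mpr fun y hy =>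
    hKsupp x y fun h => hy h.2) M (fun x y => (abs_of_nonneg (hKnonneg x y)).trans_le (hKle x y))
    g hgmeas hgbdd u₀ hu₀
end

section
/- Let u ∈ C²(ℝⁿ) have bounded first and second derivatives and α-Hölder second derivatives with constant H. Then there exists a constant c, independent of ε, such that sup_{x ∈ ℝⁿ} |𝒦_ε u(x) − 𝒦u(x)| ≤ c ε^α for all 0 < ε ≤ 1, where 𝒦u(x) = Σ_{i,j=1}^{n} a_{ij}(x) ∂ᵢ∂ⱼu(x) + Σ_{i=1}^{n} bᵢ(x) ∂ᵢu(x). (This is the abelian instance of the paper's Lemma 5.2.) -/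
open MeasureTheory Matrix Set

/-- First partial derivative `∂ᵢ f (x)`. -/
noncomputable def pd1 {n : ℕ} (f : EuclideanSpace ℝ (Fin n) → ℝ)
    (x : EuclideanSpace ℝ (Fin n)) (i : Fin n) : ℝ :=
  fderiv ℝ f x (EuclideanSpace.single i 1)

/-- Second partial derivative `∂ᵢ∂ⱼ f (x)`. -/
noncomputable def pd2 {n : ℕ} (f : EuclideanSpace ℝ (Fin n) → ℝ)
    (x : EuclideanSpace ℝ (Fin n)) (i j : Fin n) : ℝ :=
  fderiv ℝ (fderiv ℝ f) x (EuclideanSpace.single i 1) (EuclideanSpace.single j 1)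

/-- The Laplacian `Δf(x) = ∑ᵢ ∂ᵢ∂ᵢ f(x)`. -/
noncomputable def lap {n : ℕ} (f : EuclideanSpace ℝ (Fin n) → ℝ)
    (x : EuclideanSpace ℝ (Fin n)) : ℝ :=
  ∑ i, pd2 f x i i

/-- Matrix acting on a Euclidean vector. -/
noncomputable def mvec {n : ℕ} (A : Matrix (Fin n) (Fin n) ℝ)
    (x : EuclideanSpace ℝ (Fin n)) : EuclideanSpace ℝ (Fin n) :=
  Matrix.toEuclideanLin A x

/-- The affine function `ã(w) = w₁ + ⋯ + w_n + M`. -/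
noncomputable def atil {n : ℕ} (M : ℝ) (w : EuclideanSpace ℝ (Fin n)) : ℝ :=
  (∑ i, w i) + M

/-- The matrix `E(x) = (M/2) W(x) A(x)⁻¹` with `W(x) = diag(b(x))`. -/
noncomputable def Emat {n : ℕ} (M : ℝ) (A : EuclideanSpace ℝ (Fin n) → Matrix (Fin n) (Fin n) ℝ)
    (b : EuclideanSpace ℝ (Fin n) → Fin n → ℝ) (x : EuclideanSpace ℝ (Fin n)) :
    Matrix (Fin n) (Fin n) ℝ :=
  (M / 2) • (Matrix.diagonal (b x) * (A x)⁻¹)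

/-- The rescaled kernel
`K_ε(x,y) = (c(x)/ε^{n+2}) ã(−E(x)(x−y)) J(L(x)⁻¹(x−y)/ε)`,
where `c(x) = 2/(C(J) M det(A(x))^{1/2})`. -/
noncomputable def Kker {n : ℕ} (J : EuclideanSpace ℝ (Fin n) → ℝ) (CJ M : ℝ)
    (A L : EuclideanSpace ℝ (Fin n) → Matrix (Fin n) (Fin n) ℝ)
    (b : EuclideanSpace ℝ (Fin n) → Fin n → ℝ)
    (ε : ℝ) (x y : EuclideanSpace ℝ (Fin n)) : ℝ :=
  2 / (CJ * M * Real.sqrt (A x).det) / ε ^ (n + 2) *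
    atil M (-(mvec (Emat M A b x) (x - y))) *
    J (ε⁻¹ • mvec (L x)⁻¹ (x - y))

/-- The rescaled nonlocal operator `𝒦_ε u(x) = ∫ K_ε(x,y)(u(y) − u(x)) dy`. -/
noncomputable def Kop {n : ℕ} (J : EuclideanSpace ℝ (Fin n) → ℝ) (CJ M : ℝ)
    (A L : EuclideanSpace ℝ (Fin n) → Matrix (Fin n) (Fin n) ℝ)
    (b : EuclideanSpace ℝ (Fin n) → Fin n → ℝ)
    (ε : ℝ) (u : EuclideanSpace ℝ (Fin n) → ℝ) (x : EuclideanSpace ℝ (Fin n)) : ℝ :=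
  ∫ y, Kker J CJ M A L b ε x y * (u y - u x)

/-- The local operator `𝒦u(x) = ∑ᵢⱼ aᵢⱼ(x)∂ᵢ∂ⱼu(x) + ∑ᵢ bᵢ(x)∂ᵢu(x)`. -/
noncomputable def Kloc {n : ℕ} (A : EuclideanSpace ℝ (Fin n) → Matrix (Fin n) (Fin n) ℝ)
    (b : EuclideanSpace ℝ (Fin n) → Fin n → ℝ)
    (u : EuclideanSpace ℝ (Fin n) → ℝ) (x : EuclideanSpace ℝ (Fin n)) : ℝ :=
  (∑ i, ∑ j, A x i j * pd2 u x i j) + ∑ i, b x i * pd1 u x i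

/-!
Substituting `y = x - ε L(x) z` absorbs the Jacobian and the factor `det A(x)^{1/2}` and turns
`𝒦_ε u(x)` into `2 / (C(J) M ε²)` times the `J`-average of `(M - ε g(z)) (u(x - ε L(x) z) - u(x))`,
where `g(z) = ∑ᵢ (E(x) L(x) z)ᵢ`. In the second-order Taylor expansion of the increment the odd
terms vanish because `J` is even, and since the second moments of `J` are isotropic the even ones
are traces: the Hessian term gives `A = L Lᵀ`, and the product of `g` with the gradient gives
`E L Lᵀ = (M / 2) diag b`, that is, the drift. The Hölder bound on `D²u` makes the Taylor remainder
`O(ε^{2+α})`, uniformly in `x` because `‖L(x)‖² ≤ tr A(x)` is bounded.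
-/

section Taylor

variable {E F : Type*} [NormedAddCommGroup E] [NormedSpace ℝ E]
  [NormedAddCommGroup F] [NormedSpace ℝ F]

theorem norm_sub_taylor_one_segment_le {f : E → F} (hf : Differentiable ℝ f) {x h : E} {K : ℝ}
    (hK : ∀ y ∈ segment ℝ x (x + h), ‖fderiv ℝ f y - fderiv ℝ f x‖ ≤ K) {t : ℝ}
    (ht : t ∈ Icc (0 : ℝ) 1) :
    ‖f (x + t • h) - f x - fderiv ℝ f x (t • h)‖ ≤ K * ‖h‖ := by
  have hK₀ : 0 ≤ K :=
    (norm_nonneg (fderiv ℝ f x - fderiv ℝ f x)).trans (hK x (left_mem_segment ℝ x _))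
  have hmem : x + t • h ∈ segment ℝ x (x + h) := by
    rw [segment_eq_image']
    exact ⟨t, ht, by rw [add_sub_cancel_left]⟩
  calc ‖f (x + t • h) - f x - fderiv ℝ f x (t • h)‖
      ≤ K * ‖t • h‖ := by
        simpa only [add_sub_cancel_left] using
          (convex_segment x (x + h)).norm_image_sub_le_of_norm_hasFDerivWithin_le'
            (fun y _ => (hf y).hasFDerivAt.hasFDerivWithinAt) hK
            (left_mem_segment ℝ x _) hmem
    _ ≤ K * ‖h‖ := by
        rw [norm_smul, Real.norm_of_nonneg ht.1]
        exact mul_le_mul_of_nonneg_left (mul_le_of_le_one_left (norm_nonneg h) ht.2) hK₀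

theorem norm_sub_taylor_two_le {u : E → F} (hu : Differentiable ℝ u)
    (hu' : Differentiable ℝ (fderiv ℝ u)) {x h : E} {K : ℝ}
    (hK : ∀ y ∈ segment ℝ x (x + h),
      ‖fderiv ℝ (fderiv ℝ u) y - fderiv ℝ (fderiv ℝ u) x‖ ≤ K) :
    ‖u (x + h) - u x - fderiv ℝ u x h - (2⁻¹ : ℝ) • fderiv ℝ (fderiv ℝ u) x h h‖ ≤
      K * ‖h‖ ^ 2 := by
  set D := fderiv ℝ (fderiv ℝ u) x
  have hfirst : ∀ t ∈ Ico (0 : ℝ) 1,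
      ‖fderiv ℝ u (x + t • h) - fderiv ℝ u x - D (t • h)‖ ≤ K * ‖h‖ := fun t ht =>
    norm_sub_taylor_one_segment_le hu' hK (Ico_subset_Icc_self ht)
  have hderiv : ∀ t : ℝ,
      HasDerivAt (fun t : ℝ => u (x + t • h) - t • fderiv ℝ u x h - (2⁻¹ * t ^ 2) • D h h)
        ((fderiv ℝ u (x + t • h) - fderiv ℝ u x - D (t • h)) h) t := by
    intro t
    have hline : HasDerivAt (fun t : ℝ => x + t • h) h t := by
      simpa using ((hasDerivAt_id t).smul_const h).const_add x
    have hsq : HasDerivAt (fun t : ℝ => 2⁻¹ * t ^ 2) t t := by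
      simpa using (hasDerivAt_pow 2 t).const_mul (2⁻¹ : ℝ)
    have hu_line : HasDerivAt (fun t : ℝ => u (x + t • h)) (fderiv ℝ u (x + t • h) h) t :=
      (hu _).hasFDerivAt.comp_hasDerivAt t hline
    simpa using (hu_line.fun_sub ((hasDerivAt_id t).smul_const (fderiv ℝ u x h))).fun_sub
      (hsq.smul_const (D h h))
  have hmvt := norm_image_sub_le_of_norm_deriv_le_segment_01'
    (fun t _ => (hderiv t).hasDerivWithinAt)
    (fun t ht => ContinuousLinearMap.le_of_opNorm_le _ (hfirst t ht) h)
  calc ‖u (x + h) - u x - fderiv ℝ u x h - (2⁻¹ : ℝ) • D h h‖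
      ≤ K * ‖h‖ * ‖h‖ := by
        convert hmvt using 2
        simp only [one_smul, zero_smul, add_zero, one_pow, mul_one, ne_eq, OfNat.ofNat_ne_zero,
          not_false_eq_true, zero_pow, mul_zero, sub_zero]
        abel
    _ = K * ‖h‖ ^ 2 := by ring

theorem norm_increment_sub_taylor_two_le {u : E → F} (hu : ContDiff ℝ 2 u) {x v : E} {K ρ : ℝ}
    (hv : ‖v‖ ≤ ρ) (hK : ∀ y ∈ Metric.closedBall x ρ,
      ‖fderiv ℝ (fderiv ℝ u) y - fderiv ℝ (fderiv ℝ u) x‖ ≤ K) :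
    ‖u (x - v) - u x - (-fderiv ℝ u x v + (2⁻¹ : ℝ) • fderiv ℝ (fderiv ℝ u) x v v)‖ ≤
      K * ρ ^ 2 := by
  have hx : x ∈ Metric.closedBall x ρ := Metric.mem_closedBall_self ((norm_nonneg v).trans hv)
  have hball : segment ℝ x (x + -v) ⊆ Metric.closedBall x ρ :=
    (convex_closedBall x ρ).segment_subset hx (by simpa using hv)
  have hK₀ : 0 ≤ K := (norm_nonneg (fderiv ℝ (fderiv ℝ u) x - _)).trans (hK x hx)
  have htaylor := norm_sub_taylor_two_le (hu.differentiable two_ne_zero)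
    ((hu.fderiv_right (m := 1) one_add_one_eq_two.le).differentiable one_ne_zero)
    (fun y hy => hK y (hball hy))
  simp only [← sub_eq_add_neg, map_neg, _root_.neg_apply, neg_neg, norm_neg] at htaylor
  calc ‖u (x - v) - u x - (-fderiv ℝ u x v + (2⁻¹ : ℝ) • fderiv ℝ (fderiv ℝ u) x v v)‖
      ≤ K * ‖v‖ ^ 2 := by rwa [← sub_sub, sub_neg_eq_add, ← sub_neg_eq_add _ (fderiv ℝ u x v)]
    _ ≤ K * ρ ^ 2 := by gcongr

end Taylor

section EvenKernel

theorem integral_eq_zero_of_odd {G E : Type*} [AddGroup G] [MeasurableSpace G] [MeasurableNeg G]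
    [NormedAddCommGroup E] [NormedSpace ℝ E] {μ : Measure G} [μ.IsNegInvariant] {f : G → E}
    (hf : f.Odd) : ∫ z, f z ∂μ = 0 := by
  have h := integral_neg_eq_self f μ
  simp only [hf _, integral_neg] at h
  have : IsAddTorsionFree E := .of_isTorsionFree ℝ E
  exact neg_eq_self.mp h

theorem neg_mem_tsupport_of_even {G E : Type*} [TopologicalSpace G] [InvolutiveNeg G]
    [ContinuousNeg G] [Zero E] {f : G → E} (hf : f.Even) {z : G} (hz : z ∈ tsupport f) :
    -z ∈ tsupport f := by
  have h := tsupport_comp_eq_preimage f (Homeomorph.neg G)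
  rw [show f ∘ Homeomorph.neg G = f from funext hf] at h
  rwa [h] at hz

theorem integrable_mul_of_hasCompactSupport {X : Type*} [TopologicalSpace X] [T2Space X]
    [MeasurableSpace X] [OpensMeasurableSpace X] {μ : Measure X} {J f : X → ℝ}
    (hJ : Integrable J μ) (hJcs : HasCompactSupport J) (hf : Continuous f) :
    Integrable (fun z => J z * f z) μ := by
  refine (integrableOn_iff_integrable_of_support_subset ?_).mp
    (hJ.integrableOn.mul_continuousOn hf.continuousOn hJcs)
  exact (Function.support_mul_subset_left J f).trans (subset_tsupport J)

variable {E F : Type*} [NormedAddCommGroup E] [NormedSpace ℝ E] [MeasurableSpace E] [BorelSpace E]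
  [NormedAddCommGroup F] [NormedSpace ℝ F] {μ : Measure E} [μ.IsNegInvariant] {J : E → ℝ}

theorem integral_even_mul_quadratic (hJ : Integrable J μ) (hJcs : HasCompactSupport J)
    (hJeven : J.Even) (M : ℝ) (g p : E →L[ℝ] ℝ) (q : E →L[ℝ] E →L[ℝ] ℝ) :
    ∫ z, J z * ((M - g z) * (-p z + 2⁻¹ * q z z)) ∂μ =
      ∫ z, J z * (g z * p z) ∂μ + M / 2 * ∫ z, J z * q z z ∂μ := by
  have hodd : ∫ z, J z * (-(M * p z) - 2⁻¹ * (g z * q z z)) ∂μ = 0 :=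
    integral_eq_zero_of_odd fun z => by
      simp only [hJeven z, map_neg, _root_.neg_apply]
      ring
  have hodd_int : Integrable (fun z => J z * (-(M * p z) - 2⁻¹ * (g z * q z z))) μ :=
    integrable_mul_of_hasCompactSupport hJ hJcs (by fun_prop)
  have hgp_int : Integrable (fun z => J z * (g z * p z)) μ :=
    integrable_mul_of_hasCompactSupport hJ hJcs (by fun_prop)
  have hq_int : Integrable (fun z => J z * q z z) μ :=
    integrable_mul_of_hasCompactSupport hJ hJcs (by fun_prop)
  calc ∫ z, J z * ((M - g z) * (-p z + 2⁻¹ * q z z)) ∂μ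
      = ∫ z, J z * (-(M * p z) - 2⁻¹ * (g z * q z z)) +
          (J z * (g z * p z) + M / 2 * (J z * q z z)) ∂μ := by
        congr 1 with z
        ring
    _ = _ := by
        have hsum := integral_add hodd_int (hgp_int.add (hq_int.const_mul (M / 2)))
        simp only [Pi.add_apply] at hsum
        rw [hsum, hodd, zero_add, integral_add hgp_int (hq_int.const_mul _), integral_const_mul]

theorem abs_integral_even_mul_increment_sub_le (hJ : Integrable J μ) (hJcs : HasCompactSupport J)
    (hJeven : J.Even) {u : F → ℝ} (hu : ContDiff ℝ 2 u) {x : F} {M C K ρ : ℝ} {g : E →L[ℝ] ℝ}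
    {T : E →L[ℝ] F} (hg : ∀ z ∈ tsupport J, |M - g z| ≤ C) (hT : ∀ z ∈ tsupport J, ‖T z‖ ≤ ρ)
    (hK : ∀ y ∈ Metric.closedBall x ρ,
      ‖fderiv ℝ (fderiv ℝ u) y - fderiv ℝ (fderiv ℝ u) x‖ ≤ K) :
    |∫ z, J z * ((M - g z) * (u (x - T z) - u x)) ∂μ -
        (∫ z, J z * (g z * fderiv ℝ u x (T z)) ∂μ +
          M / 2 * ∫ z, J z * fderiv ℝ (fderiv ℝ u) x (T z) (T z) ∂μ)| ≤
      C * (K * ρ ^ 2) * ∫ z, |J z| ∂μ := by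
  let p : E →L[ℝ] ℝ := fderiv ℝ u x ∘L T
  let q : E →L[ℝ] E →L[ℝ] ℝ := (fderiv ℝ (fderiv ℝ u) x).bilinearComp T T
  have hpointwise : ∀ z, ‖J z * ((M - g z) * (u (x - T z) - u x)) -
      J z * ((M - g z) * (-p z + 2⁻¹ * q z z))‖ ≤ C * (K * ρ ^ 2) * |J z| := by
    intro z
    by_cases hz : z ∈ tsupport J
    · rw [← mul_sub, ← mul_sub, norm_mul, norm_mul, mul_comm]
      refine mul_le_mul_of_nonneg_right ?_ (abs_nonneg _)
      exact mul_le_mul (hg z hz) (norm_increment_sub_taylor_two_le hu (hT z hz) hK)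
        (norm_nonneg _) ((abs_nonneg _).trans (hg z hz))
    · simp [image_eq_zero_of_notMem_tsupport hz]
  have hu_cont : Continuous u := hu.continuous
  have hquadratic : ∫ z, J z * ((M - g z) * (-p z + 2⁻¹ * q z z)) ∂μ =
      ∫ z, J z * (g z * fderiv ℝ u x (T z)) ∂μ +
        M / 2 * ∫ z, J z * fderiv ℝ (fderiv ℝ u) x (T z) (T z) ∂μ :=
    integral_even_mul_quadratic hJ hJcs hJeven M g p q
  rw [← hquadratic, ← integral_const_mul,
    ← integral_sub (integrable_mul_of_hasCompactSupport hJ hJcs (by fun_prop))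
      (integrable_mul_of_hasCompactSupport hJ hJcs (by fun_prop))]
  exact norm_integral_le_of_norm_le (hJ.abs.const_mul _) (.of_forall hpointwise)

end EvenKernel

section OrderedRing

variable {R : Type*} [CommRing R] [LinearOrder R] [IsStrictOrderedRing R]

theorem abs_sub_mul_le_of_abs_sub_le {M w C ε : R} (hε : ε ∈ Icc (0 : R) 1) (h : |M - w| ≤ C) :
    |M - ε * w| ≤ |M| + C := by
  calc |M - ε * w| = |(1 - ε) * M + ε * (M - w)| := by ring_nf
    _ ≤ (1 - ε) * |M| + ε * |M - w| := by
        simpa only [abs_mul, abs_of_nonneg hε.1, abs_of_nonneg (sub_nonneg.mpr hε.2)] using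
          abs_add_le ((1 - ε) * M) (ε * (M - w))
    _ ≤ |M| + C := add_le_add
        (mul_le_of_le_one_left (abs_nonneg M) (sub_le_self 1 hε.1))
        ((mul_le_of_le_one_left (abs_nonneg _) hε.2).trans h)

theorem det_pos_of_isLowerTriangular {m : Type*} [Fintype m] [DecidableEq m] [LinearOrder m]
    {P : Matrix m m R} (hP : P.IsLowerTriangular) (hdiag : ∀ i, 0 < P i i) : 0 < P.det := by
  rw [det_of_isLowerTriangular P hP]
  exact Finset.prod_pos fun i _ => hdiag i

end OrderedRing

section ChangeOfVariables

variable {E F : Type*} [NormedAddCommGroup E] [NormedSpace ℝ E] [FiniteDimensional ℝ E]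
  [MeasurableSpace E] [BorelSpace E] [NormedAddCommGroup F] [NormedSpace ℝ F]

theorem integral_eq_abs_det_smul_integral_comp_sub (μ : Measure E) [μ.IsAddHaarMeasure]
    {T : E →L[ℝ] E} (hT : T.det ≠ 0) (G : E → F) (x : E) :
    ∫ y, G y ∂μ = |T.det| • ∫ z, G (x - T z) ∂μ := by
  have hbij : Function.Bijective T := (T.toContinuousLinearEquivOfDetNeZero hT).bijective
  have himage := integral_image_eq_integral_abs_det_fderiv_smul μ MeasurableSet.univ
    (fun z _ => T.hasFDerivAt.hasFDerivWithinAt) hbij.injective.injOn (fun y => G (x - y))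
  rw [image_univ, hbij.surjective.range_eq, setIntegral_univ, setIntegral_univ,
    integral_sub_left_eq_self G μ x, integral_smul] at himage
  exact himage

end ChangeOfVariables

section OrthonormalBasis

variable {𝕜 ι E F : Type*} [RCLike 𝕜] [Fintype ι] [NormedAddCommGroup E] [InnerProductSpace 𝕜 E]
  [NormedAddCommGroup F] [NormedSpace 𝕜 F]

theorem opNorm_le_sum_norm_apply (v : OrthonormalBasis ι 𝕜 E) (f : E →L[𝕜] F) :
    ‖f‖ ≤ ∑ i, ‖f (v i)‖ := by
  refine f.opNorm_le_bound (Finset.sum_nonneg fun i _ => norm_nonneg _) fun z => ?_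
  calc ‖f z‖ = ‖∑ i, v.repr z i • f (v i)‖ := by
        conv_lhs => rw [← v.sum_repr z, map_sum]
        simp only [map_smul]
    _ ≤ ∑ i, ‖f (v i)‖ * ‖z‖ := norm_sum_le_of_le _ fun i _ => by
        rw [norm_smul, mul_comm, ← v.repr.norm_map z]
        gcongr
        exact PiLp.norm_apply_le _ i
    _ = (∑ i, ‖f (v i)‖) * ‖z‖ := (Finset.sum_mul ..).symm

theorem opNorm_bilin_le_of_forall_basis_le (v : OrthonormalBasis ι 𝕜 E)
    {B : E →L[𝕜] E →L[𝕜] F} {C : ℝ} (hB : ∀ i j, ‖B (v i) (v j)‖ ≤ C) :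
    ‖B‖ ≤ (Fintype.card ι : ℝ) ^ 2 * C := by
  calc ‖B‖ ≤ ∑ i, ‖B (v i)‖ := opNorm_le_sum_norm_apply v B
    _ ≤ ∑ i, ∑ j, ‖B (v i) (v j)‖ :=
        Finset.sum_le_sum fun i _ => opNorm_le_sum_norm_apply v (B (v i))
    _ ≤ ∑ _i : ι, ∑ _j : ι, C :=
        Finset.sum_le_sum fun i _ => Finset.sum_le_sum fun j _ => hB i j
    _ = (Fintype.card ι : ℝ) ^ 2 * C := by
        simp only [Finset.sum_const, Finset.card_univ, nsmul_eq_mul]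
        ring

end OrthonormalBasis

section EuclideanSpace

variable {ι : Type*} [Fintype ι] [DecidableEq ι]

theorem bilin_apply_eq_sum (B : EuclideanSpace ℝ ι →L[ℝ] EuclideanSpace ℝ ι →L[ℝ] ℝ)
    (z w : EuclideanSpace ℝ ι) :
    B z w = ∑ i, ∑ j, z i * w j * B (EuclideanSpace.single i 1) (EuclideanSpace.single j 1) := by
  have hexpand (v : EuclideanSpace ℝ ι) : v = ∑ i, v i • EuclideanSpace.single i (1 : ℝ) := by
    simpa using ((EuclideanSpace.basisFun ι ℝ).sum_repr v).symm
  conv_lhs => rw [hexpand z, hexpand w]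
  simp only [map_sum, map_smul, _root_.sum_apply, _root_.smul_apply, smul_eq_mul, Finset.mul_sum]
  rw [Finset.sum_comm]
  exact Finset.sum_congr rfl fun i _ => Finset.sum_congr rfl fun j _ => by ring

theorem sum_bilin_toEuclideanCLM_single
    (B : EuclideanSpace ℝ ι →L[ℝ] EuclideanSpace ℝ ι →L[ℝ] ℝ) (P Q : Matrix ι ι ℝ) :
    ∑ k, B (toEuclideanCLM (𝕜 := ℝ) P (EuclideanSpace.single k 1))
        (toEuclideanCLM (𝕜 := ℝ) Q (EuclideanSpace.single k 1)) =
      ∑ i, ∑ j, (P * Qᵀ) i j *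
        B (EuclideanSpace.single i 1) (EuclideanSpace.single j 1) := by
  simp only [bilin_apply_eq_sum B (toEuclideanCLM (𝕜 := ℝ) P _), ofLp_toEuclideanCLM,
    PiLp.ofLp_single, mulVec_single_one, col_apply, mul_apply, transpose_apply, Finset.sum_mul]
  rw [Finset.sum_comm]
  exact Finset.sum_congr rfl fun i _ => Finset.sum_comm

theorem norm_toEuclideanCLM_apply_sq_le (P : Matrix ι ι ℝ) (z : EuclideanSpace ℝ ι) :
    ‖toEuclideanCLM (𝕜 := ℝ) P z‖ ^ 2 ≤ (P * Pᵀ).trace * ‖z‖ ^ 2 := by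
  rw [EuclideanSpace.real_norm_sq_eq, EuclideanSpace.real_norm_sq_eq, trace, Finset.sum_mul]
  gcongr with i
  calc (∑ j, P i j * z j) ^ 2 ≤ (∑ j, P i j ^ 2) * ∑ j, z j ^ 2 :=
        Finset.sum_mul_sq_le_sq_mul_sq _ _ _
    _ = (P * Pᵀ).diag i * ∑ j, z j ^ 2 := by
        simp only [diag_apply, mul_apply, transpose_apply, sq]

theorem exists_forall_norm_toEuclideanCLM_apply_le {X : Type*} {P : X → Matrix ι ι ℝ}
    (hP : ∀ i, ∃ C, ∀ x, |(P x * (P x)ᵀ) i i| ≤ C)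
    {s : Set (EuclideanSpace ℝ ι)} (hs : Bornology.IsBounded s) :
    ∃ ρ, 0 ≤ ρ ∧ ∀ x, ∀ z ∈ s, ‖toEuclideanCLM (𝕜 := ℝ) (P x) z‖ ≤ ρ := by
  choose C hC using hP
  obtain ⟨R, hR⟩ := hs.exists_norm_le
  refine ⟨√(|∑ i, C i| * R ^ 2), Real.sqrt_nonneg _, fun x z hz => Real.le_sqrt_of_sq_le ?_⟩
  have htrace : (P x * (P x)ᵀ).trace ≤ |∑ i, C i| :=
    (Finset.sum_le_sum fun i _ => (le_abs_self _).trans (hC i x)).trans (le_abs_self _)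
  calc ‖toEuclideanCLM (𝕜 := ℝ) (P x) z‖ ^ 2
      ≤ (P x * (P x)ᵀ).trace * ‖z‖ ^ 2 := norm_toEuclideanCLM_apply_sq_le (P x) z
    _ ≤ |∑ i, C i| * R ^ 2 := by
        gcongr
        exact hR z hz

theorem integral_mul_bilin_of_isotropic {μ : Measure (EuclideanSpace ℝ ι)}
    {J : EuclideanSpace ℝ ι → ℝ} (hJ : Integrable J μ) (hJcs : HasCompactSupport J) {C : ℝ}
    (hmom : ∀ i j, ∫ z, J z * (z i * z j) ∂μ = if i = j then C else 0)
    (B : EuclideanSpace ℝ ι →L[ℝ] EuclideanSpace ℝ ι →L[ℝ] ℝ) :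
    ∫ z, J z * B z z ∂μ =
      C * ∑ k, B (EuclideanSpace.single k 1) (EuclideanSpace.single k 1) := by
  have hint : ∀ i j, Integrable (fun z => J z * (z i * z j) *
      B (EuclideanSpace.single i 1) (EuclideanSpace.single j 1)) μ := fun i j =>
    (integrable_mul_of_hasCompactSupport hJ hJcs (by fun_prop)).mul_const _
  calc ∫ z, J z * B z z ∂μ
      = ∫ z, ∑ i, ∑ j, J z * (z i * z j) *
          B (EuclideanSpace.single i 1) (EuclideanSpace.single j 1) ∂μ := by
        congr 1 with z
        simp only [bilin_apply_eq_sum B z, Finset.mul_sum, mul_assoc]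
    _ = ∑ i, ∑ j, (if i = j then C else 0) *
          B (EuclideanSpace.single i 1) (EuclideanSpace.single j 1) := by
        rw [integral_finsetSum _ fun i _ => integrable_finsetSum _ fun j _ => hint i j]
        simp only [integral_finsetSum _ fun j _ => hint _ j, integral_mul_const, hmom]
    _ = C * ∑ k, B (EuclideanSpace.single k 1) (EuclideanSpace.single k 1) := by
        simp only [ite_mul, zero_mul, Finset.sum_ite_eq, Finset.mem_univ, if_true, Finset.mul_sum]

end EuclideanSpace

section Operator

variable {n : ℕ}

theorem norm_fderiv_fderiv_sub_le_of_pd2 {u : EuclideanSpace ℝ (Fin n) → ℝ} {K : ℝ}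
    {x y : EuclideanSpace ℝ (Fin n)} (h : ∀ i j, |pd2 u x i j - pd2 u y i j| ≤ K) :
    ‖fderiv ℝ (fderiv ℝ u) x - fderiv ℝ (fderiv ℝ u) y‖ ≤ (n : ℝ) ^ 2 * K := by
  simpa only [Fintype.card_fin] using
    opNorm_bilin_le_of_forall_basis_le (EuclideanSpace.basisFun (Fin n) ℝ) fun i j => by
      simpa only [EuclideanSpace.basisFun_apply, Real.norm_eq_abs, _root_.sub_apply, pd2]
        using h i j

theorem norm_fderiv_fderiv_sub_le_of_holder {u : EuclideanSpace ℝ (Fin n) → ℝ}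
    {α H r : ℝ} (hα : 0 ≤ α) (hH : 0 ≤ H)
    (huHolder : ∀ x y, ∀ i j : Fin n, |pd2 u x i j - pd2 u y i j| ≤ H * ‖x - y‖ ^ α)
    {x y : EuclideanSpace ℝ (Fin n)} (hy : y ∈ Metric.closedBall x r) :
    ‖fderiv ℝ (fderiv ℝ u) y - fderiv ℝ (fderiv ℝ u) x‖ ≤ (n : ℝ) ^ 2 * (H * r ^ α) :=
  norm_fderiv_fderiv_sub_le_of_pd2 fun i j => (huHolder y x i j).trans <| by
    gcongr
    exact mem_closedBall_iff_norm.mp hy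

/-- The linear part `w ↦ w₁ + ⋯ + wₙ` of `ã`. -/
noncomputable def coordSum (n : ℕ) : EuclideanSpace ℝ (Fin n) →L[ℝ] ℝ :=
  ∑ i, EuclideanSpace.proj i

theorem coordSum_apply (w : EuclideanSpace ℝ (Fin n)) : coordSum n w = ∑ i, w i := by
  simp [coordSum]

theorem atil_neg (M : ℝ) (w : EuclideanSpace ℝ (Fin n)) : atil M (-w) = M - coordSum n w := by
  rw [atil, ← coordSum_apply, map_neg, neg_add_eq_sub]

theorem abs_atil_neg_le_of_nonneg {X Y : Type*} [TopologicalSpace X] [InvolutiveNeg X]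
    [ContinuousNeg X] [Zero Y] {J : X → Y} (hJeven : J.Even) {M : ℝ}
    {T : X → EuclideanSpace ℝ (Fin n)} (hT : T.Odd)
    (hnonneg : ∀ z ∈ tsupport J, 0 ≤ atil M (-T z)) {z : X} (hz : z ∈ tsupport J) :
    |atil M (-T z)| ≤ 2 * M := by
  have hpos := hnonneg z hz
  have hneg := hnonneg (-z) (neg_mem_tsupport_of_even hJeven hz)
  rw [hT z, atil_neg, map_neg] at hneg
  rw [abs_of_nonneg hpos]
  rw [atil_neg] at hpos ⊢
  linarith

variable {J : EuclideanSpace ℝ (Fin n) → ℝ} {CJ M : ℝ}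
  {A L : EuclideanSpace ℝ (Fin n) → Matrix (Fin n) (Fin n) ℝ}
  {b : EuclideanSpace ℝ (Fin n) → Fin n → ℝ} {x : EuclideanSpace ℝ (Fin n)}

/-- The functional `z ↦ ∑ᵢ (E(x) L(x) z)ᵢ`, for which `ã(-ε E(x) L(x) z) = M - ε * driftForm z`;
it carries the first-order part of the operator. -/
noncomputable def driftForm (M : ℝ) (A L : EuclideanSpace ℝ (Fin n) → Matrix (Fin n) (Fin n) ℝ)
    (b : EuclideanSpace ℝ (Fin n) → Fin n → ℝ) (x : EuclideanSpace ℝ (Fin n)) :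
    EuclideanSpace ℝ (Fin n) →L[ℝ] ℝ :=
  coordSum n ∘L toEuclideanCLM (𝕜 := ℝ) (Emat M A b x * L x)

theorem driftForm_apply (z : EuclideanSpace ℝ (Fin n)) :
    driftForm M A L b x z = coordSum n (mvec (Emat M A b x) (mvec (L x) z)) := by
  rw [driftForm, map_mul]
  rfl

theorem sum_driftForm_mul (hA : A x = L x * (L x)ᵀ) (hL : IsUnit (L x).det)
    (p : EuclideanSpace ℝ (Fin n) →L[ℝ] ℝ) :
    ∑ k, driftForm M A L b x (EuclideanSpace.single k 1) *
        p (toEuclideanCLM (𝕜 := ℝ) (L x) (EuclideanSpace.single k 1)) =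
      M / 2 * ∑ i, b x i * p (EuclideanSpace.single i 1) := by
  have hAdet : IsUnit (A x).det := by
    rw [hA, det_mul, det_transpose]
    exact hL.mul hL
  have hELLt : Emat M A b x * L x * (L x)ᵀ = (M / 2) • diagonal (b x) := by
    rw [Matrix.mul_assoc, ← hA, Emat, smul_mul, Matrix.mul_assoc, nonsing_inv_mul _ hAdet,
      Matrix.mul_one]
  have hsum := sum_bilin_toEuclideanCLM_single ((coordSum n).smulRight p) (Emat M A b x * L x) (L x)
  rw [hELLt] at hsum
  simpa [driftForm, coordSum_apply, diagonal_apply, Finset.mul_sum, mul_assoc] using hsum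

theorem integral_moments_eq_Kloc (hJ : Integrable J) (hJcs : HasCompactSupport J)
    (hmom : ∀ i j : Fin n, ∫ z, J z * (z i * z j) = if i = j then CJ else 0)
    (hA : A x = L x * (L x)ᵀ) (hL : IsUnit (L x).det) (u : EuclideanSpace ℝ (Fin n) → ℝ) :
    (∫ z, J z * (driftForm M A L b x z * fderiv ℝ u x (toEuclideanCLM (𝕜 := ℝ) (L x) z))) +
        M / 2 * ∫ z, J z * fderiv ℝ (fderiv ℝ u) x (toEuclideanCLM (𝕜 := ℝ) (L x) z)
          (toEuclideanCLM (𝕜 := ℝ) (L x) z) =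
      CJ * M / 2 * Kloc A b u x := by
  set T := toEuclideanCLM (𝕜 := ℝ) (L x)
  have hfirst : ∫ z, J z * (driftForm M A L b x z * fderiv ℝ u x (T z)) =
      CJ * (M / 2 * ∑ i, b x i * pd1 u x i) := by
    have h := integral_mul_bilin_of_isotropic hJ hJcs hmom
      ((driftForm M A L b x).smulRight (fderiv ℝ u x ∘L T))
    simp only [ContinuousLinearMap.smulRight_apply, _root_.smul_apply, smul_eq_mul,
      ContinuousLinearMap.comp_apply] at h
    rw [h, sum_driftForm_mul hA hL]
    rfl
  have hsecond : ∫ z, J z * fderiv ℝ (fderiv ℝ u) x (T z) (T z) =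
      CJ * ∑ i, ∑ j, A x i j * pd2 u x i j := by
    have h := integral_mul_bilin_of_isotropic hJ hJcs hmom
      ((fderiv ℝ (fderiv ℝ u) x).bilinearComp T T)
    simp only [ContinuousLinearMap.bilinearComp_apply] at h
    rw [h, sum_bilin_toEuclideanCLM_single, ← hA]
    rfl
  rw [hfirst, hsecond, Kloc]
  ring

theorem Kker_sub_smul (hL : IsUnit (L x).det) {ε : ℝ} (hε : ε ≠ 0)
    (z : EuclideanSpace ℝ (Fin n)) :
    Kker J CJ M A L b ε x (x - ε • toEuclideanCLM (𝕜 := ℝ) (L x) z) =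
      2 / (CJ * M * √(A x).det) / ε ^ (n + 2) * (M - ε * driftForm M A L b x z) * J z := by
  have hLinv : mvec (L x)⁻¹ (toEuclideanCLM (𝕜 := ℝ) (L x) z) = z := by
    change (toEuclideanCLM (𝕜 := ℝ) (L x)⁻¹ * toEuclideanCLM (𝕜 := ℝ) (L x)) z = z
    rw [← map_mul, nonsing_inv_mul _ hL, map_one]
    rfl
  have hmvec (P : Matrix (Fin n) (Fin n) ℝ) (w : EuclideanSpace ℝ (Fin n)) :
      mvec P (ε • w) = ε • mvec P w := map_smul _ _ _
  rw [Kker, sub_sub_cancel, hmvec, hmvec, hLinv, inv_smul_smul₀ hε, atil_neg, map_smul,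
    driftForm_apply]
  rfl

theorem Kop_eq_integral (hA : A x = L x * (L x)ᵀ) (hL : IsUnit (L x).det) {ε : ℝ} (hε : 0 < ε)
    (u : EuclideanSpace ℝ (Fin n) → ℝ) :
    Kop J CJ M A L b ε u x = 2 / (CJ * M) / ε ^ 2 *
      ∫ z, J z * ((M - ε * driftForm M A L b x z) *
        (u (x - ε • toEuclideanCLM (𝕜 := ℝ) (L x) z) - u x)) := by
  set T := toEuclideanCLM (𝕜 := ℝ) (L x)
  have hdet : (ε • T).det = ε ^ n * (L x).det := by
    change LinearMap.det (ε • toEuclideanLin (L x)) = _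
    rw [LinearMap.det_smul, finrank_euclideanSpace_fin, LinearMap.det_toLpLin]
  have hsqrt : √(A x).det = |(L x).det| := by
    rw [hA, det_mul, det_transpose, Real.sqrt_mul_self_eq_abs]
  have habs : |(L x).det| ≠ 0 := abs_ne_zero.mpr hL.ne_zero
  rw [Kop, integral_eq_abs_det_smul_integral_comp_sub volume (T := ε • T)
    (by rw [hdet]; exact mul_ne_zero (pow_ne_zero n hε.ne') hL.ne_zero) _ x, hdet, abs_mul,
    abs_of_pos (pow_pos hε n), ← integral_smul, ← integral_const_mul]
  congr 1 with z
  rw [_root_.smul_apply, Kker_sub_smul hL hε.ne', hsqrt, smul_eq_mul, pow_add]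
  field_simp

theorem abs_Kop_sub_Kloc_le (hJ : Integrable J) (hJcs : HasCompactSupport J) (hJeven : J.Even)
    (hCJ : CJ ≠ 0) (hmom : ∀ i j : Fin n, ∫ z, J z * (z i * z j) = if i = j then CJ else 0)
    (hM : M ≠ 0) (hA : A x = L x * (L x)ᵀ) (hL : IsUnit (L x).det)
    {u : EuclideanSpace ℝ (Fin n) → ℝ} (hu : ContDiff ℝ 2 u) {ε C K ρ : ℝ} (hε : 0 < ε)
    (hC : ∀ z ∈ tsupport J, |M - ε * driftForm M A L b x z| ≤ C)
    (hρ : ∀ z ∈ tsupport J, ‖toEuclideanCLM (𝕜 := ℝ) (L x) z‖ ≤ ρ)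
    (hK : ∀ y ∈ Metric.closedBall x (ε * ρ),
      ‖fderiv ℝ (fderiv ℝ u) y - fderiv ℝ (fderiv ℝ u) x‖ ≤ K) :
    |Kop J CJ M A L b ε u x - Kloc A b u x| ≤
      |2 / (CJ * M)| * (C * (K * ρ ^ 2) * ∫ z, |J z|) := by
  set g := driftForm M A L b x
  set T := toEuclideanCLM (𝕜 := ℝ) (L x)
  have hεT : ∀ z ∈ tsupport J, ‖(ε • T) z‖ ≤ ε * ρ := fun z hz => by
    rw [_root_.smul_apply, norm_smul, Real.norm_of_nonneg hε.le]
    exact mul_le_mul_of_nonneg_left (hρ z hz) hε.le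
  have herror := abs_integral_even_mul_increment_sub_le hJ hJcs hJeven hu (g := ε • g) hC hεT hK
  have hmoments : (∫ z, J z * ((ε • g) z * fderiv ℝ u x ((ε • T) z))) +
      M / 2 * ∫ z, J z * fderiv ℝ (fderiv ℝ u) x ((ε • T) z) ((ε • T) z) =
      ε ^ 2 * (CJ * M / 2 * Kloc A b u x) := by
    have hscale₁ : ∀ z, J z * ((ε • g) z * fderiv ℝ u x ((ε • T) z)) =
        ε ^ 2 * (J z * (g z * fderiv ℝ u x (T z))) := fun z => by
      simp only [_root_.smul_apply, map_smul, smul_eq_mul]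
      ring
    have hscale₂ : ∀ z, J z * fderiv ℝ (fderiv ℝ u) x ((ε • T) z) ((ε • T) z) =
        ε ^ 2 * (J z * fderiv ℝ (fderiv ℝ u) x (T z) (T z)) := fun z => by
      simp only [_root_.smul_apply, map_smul, smul_eq_mul]
      ring
    rw [← integral_moments_eq_Kloc hJ hJcs hmom hA hL u]
    simp only [hscale₁, hscale₂, integral_const_mul]
    ring
  rw [hmoments] at herror
  have hfactor : Kop J CJ M A L b ε u x - Kloc A b u x = 2 / (CJ * M) / ε ^ 2 *
      ((∫ z, J z * ((M - (ε • g) z) * (u (x - (ε • T) z) - u x))) -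
        ε ^ 2 * (CJ * M / 2 * Kloc A b u x)) := by
    rw [mul_sub]
    refine congrArg₂ _ (Kop_eq_integral hA hL hε u) ?_
    field_simp
  rw [hfactor, abs_mul, abs_div, abs_of_pos (pow_pos hε 2), div_mul_eq_mul_div, mul_div_assoc]
  gcongr
  calc _ ≤ C * (K * (ε * ρ) ^ 2) * (∫ z, |J z|) / ε ^ 2 := by gcongr
    _ = C * (K * ρ ^ 2) * ∫ z, |J z| := by field_simp

end Operator

theorem stmt8_general (n : ℕ) (J : EuclideanSpace ℝ (Fin n) → ℝ) (hJint : Integrable J)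
    (hJcs : HasCompactSupport J) (hJeven : J.Even) (CJ : ℝ) (hCJ : CJ ≠ 0)
    (hJmom : ∀ i j : Fin n, ∫ x, J x * (x i * x j) = if i = j then CJ else 0)
    (α : ℝ) (hα : 0 ≤ α) (H : ℝ) (hH : 0 ≤ H)
    (A : EuclideanSpace ℝ (Fin n) → Matrix (Fin n) (Fin n) ℝ)
    (hAbdd : ∀ i : Fin n, ∃ C, ∀ x, |A x i i| ≤ C)
    (L : EuclideanSpace ℝ (Fin n) → Matrix (Fin n) (Fin n) ℝ)
    (hfactor : ∀ x, A x = L x * (L x)ᵀ) (hLdet : ∀ x, IsUnit (L x).det)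
    (b : EuclideanSpace ℝ (Fin n) → Fin n → ℝ) (M : ℝ) (hM : M ≠ 0)
    (hatil : ∃ C, ∀ x, ∀ z ∈ tsupport J, |atil M (-(mvec (Emat M A b x) (mvec (L x) z)))| ≤ C)
    (u : EuclideanSpace ℝ (Fin n) → ℝ) (hu : ContDiff ℝ 2 u)
    (huHolder : ∀ x y, ∀ i j : Fin n, |pd2 u x i j - pd2 u y i j| ≤ H * ‖x - y‖ ^ α) :
    ∃ c : ℝ, ∀ ε ∈ Ioc (0:ℝ) 1, ∀ x,
      |Kop J CJ M A L b ε u x - Kloc A b u x| ≤ c * ε ^ α := by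
  obtain ⟨C, hC⟩ := hatil
  obtain ⟨ρ, hρ₀, hρ⟩ := exists_forall_norm_toEuclideanCLM_apply_le (P := L)
    (by simpa only [← hfactor] using hAbdd) hJcs.isCompact.isBounded
  refine ⟨|2 / (CJ * M)| * ((|M| + C) * ((n : ℝ) ^ 2 * (H * ρ ^ α) * ρ ^ 2) * ∫ z, |J z|),
    fun ε hε x => ?_⟩
  have hdrift : ∀ z ∈ tsupport J, |M - ε * driftForm M A L b x z| ≤ |M| + C := fun z hz =>
    abs_sub_mul_le_of_abs_sub_le (Ioc_subset_Icc_self hε) <| by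
      simpa only [atil_neg, ← driftForm_apply] using hC x z hz
  calc |Kop J CJ M A L b ε u x - Kloc A b u x|
      ≤ |2 / (CJ * M)| *
          ((|M| + C) * ((n : ℝ) ^ 2 * (H * (ε * ρ) ^ α) * ρ ^ 2) * ∫ z, |J z|) :=
        abs_Kop_sub_Kloc_le hJint hJcs hJeven hCJ hJmom hM (hfactor x) (hLdet x) hu hε.1
          hdrift (hρ x) fun y hy => norm_fderiv_fderiv_sub_le_of_holder hα hH huHolder hy
    _ = _ := by
        rw [Real.mul_rpow hε.1.le hρ₀]
        ring

/-- The rescaled nonlocal operator `𝒦_ε` approximates the local operator `𝒦` at rate `ε^α`. -/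
theorem stmt8 (n : ℕ) (hn : 1 ≤ n)
    (J : EuclideanSpace ℝ (Fin n) → ℝ) (hJint : Integrable J)
    (hJcs : HasCompactSupport J) (hJ0 : ∀ x, 0 ≤ J x) (hJeven : ∀ x, J (-x) = J x)
    (CJ : ℝ) (hCJ : 0 < CJ)
    (hJmom : ∀ i j : Fin n, ∫ x, J x * (x i * x j) = if i = j then CJ else 0)
    (α : ℝ) (hα : α ∈ Ioc (0:ℝ) 1) (H : ℝ) (hH : 0 ≤ H)
    (A : EuclideanSpace ℝ (Fin n) → Matrix (Fin n) (Fin n) ℝ)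
    (hAsymm : ∀ x, (A x).IsSymm) (hApos : ∀ x, (A x).PosDef)
    (hAsmooth : ∀ i j : Fin n, ContDiff ℝ (⊤ : ℕ∞) (fun x => A x i j))
    (hAbdd : ∀ i j : Fin n, ∀ k : ℕ, ∃ C, ∀ x,
      ‖iteratedFDeriv ℝ k (fun y => A y i j) x‖ ≤ C)
    (θ : ℝ) (hθ : 0 < θ)
    (hell : ∀ x, ∀ ξ : Fin n → ℝ, θ * ∑ i, ξ i ^ 2 ≤ ∑ i, ∑ j, A x i j * ξ i * ξ j)
    (L : EuclideanSpace ℝ (Fin n) → Matrix (Fin n) (Fin n) ℝ)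
    (hChol : ∀ x, A x = L x * (L x)ᵀ)
    (hLtri : ∀ x, ∀ i j : Fin n, i < j → L x i j = 0)
    (hLdiag : ∀ x, ∀ i : Fin n, 0 < L x i i)
    (b : EuclideanSpace ℝ (Fin n) → Fin n → ℝ)
    (hbsmooth : ∀ i : Fin n, ContDiff ℝ (⊤ : ℕ∞) (fun x => b x i))
    (hbbdd : ∃ C, ∀ x, ∀ i : Fin n, |b x i| ≤ C)
    (M : ℝ) (hM : 0 < M)
    (β : ℝ) (hβ : 0 < β)
    (hbeta : ∀ x, ∀ z ∈ tsupport J, ∀ ε ∈ Ioc (0:ℝ) 1,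
      β ≤ atil M (-(ε • mvec (Emat M A b x) (mvec (L x) z))))
    (u : EuclideanSpace ℝ (Fin n) → ℝ) (hu : ContDiff ℝ 2 u)
    (hubdd : ∃ C, ∀ x, ‖fderiv ℝ u x‖ ≤ C ∧ ‖fderiv ℝ (fderiv ℝ u) x‖ ≤ C)
    (huHolder : ∀ x y, ∀ i j : Fin n, |pd2 u x i j - pd2 u y i j| ≤ H * ‖x - y‖ ^ α) :
    ∃ c : ℝ, ∀ ε ∈ Ioc (0:ℝ) 1, ∀ x,
      |Kop J CJ M A L b ε u x - Kloc A b u x| ≤ c * ε ^ α := by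
  have hLdet : ∀ x, IsUnit (L x).det := fun x =>
    (det_pos_of_isLowerTriangular (fun i j => hLtri x i j) (hLdiag x)).ne'.isUnit
  have hnonneg : ∀ x, ∀ z ∈ tsupport J, 0 ≤ atil M (-(mvec (Emat M A b x) (mvec (L x) z))) :=
    fun x z hz => by
      simpa only [one_smul] using hβ.le.trans (hbeta x z hz 1 (right_mem_Ioc.mpr one_pos))
  have hodd : ∀ x, (fun z => mvec (Emat M A b x) (mvec (L x) z)).Odd := fun x z => by
    simp only [mvec, map_neg]
  exact stmt8_general n J hJint hJcs hJeven CJ hCJ.ne' hJmom α hα.1.le H hH A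
    (fun i => by simpa only [norm_iteratedFDeriv_zero, Real.norm_eq_abs] using hAbdd i i 0)
    L hChol hLdet b M hM.ne'
    ⟨2 * M, fun x _ => abs_atil_neg_le_of_nonneg hJeven (hodd x) (hnonneg x)⟩ u hu huHolder
end
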